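/- arXiv:1506.08041 — 2 statements merged into one kernel-verified Lean document; each statement's English description precedes it below -/
import Mathlib

section
/- Let v be a non-constant harmonic function on the open unit ball B₁ ⊂ ℝⁿ with Z(v) ∩ B_{1/2} ≠ ∅. Then there exists a constant C = C(v) > 1 such that for every x ∈ B_{1/4} with v(x) ≠ 0 there is a point x̃ ∈ B_{1/2} with |x − x̃| ≤ (3/4) · dist(x, Z(v)) and |v(x̃)| ≥ C · |v(x)|. -/
open Metric Set Filter

noncomputable section

abbrev En (n : ℕ) : Type := EuclideanSpace ℝ (Fin n)

/-- The Laplacian of `u` at `x`, computed from the second iterated Fréchet derivative. -/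
def laplacianAt {n : ℕ} (u : En n → ℝ) (x : En n) : ℝ :=
  ∑ i : Fin n, iteratedFDeriv ℝ 2 u x ![EuclideanSpace.single i 1, EuclideanSpace.single i 1]

/-- `u` is harmonic on `Ω`: twice continuously differentiable with vanishing Laplacian. -/
def HarmonicOnSet {n : ℕ} (u : En n → ℝ) (Ω : Set (En n)) : Prop :=
  ContDiffOn ℝ 2 u Ω ∧ ∀ x ∈ Ω, laplacianAt u x = 0

/-- The zero set of `u` within `Ω`. -/
def zeroSet {n : ℕ} (u : En n → ℝ) (Ω : Set (En n)) : Set (En n) :=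
  {x ∈ Ω | u x = 0}

/-- The collection of nodal domains of `u` in `Ω`, i.e. the connected components of
`Ω \ Z(u)`. -/
def nodalComponents {n : ℕ} (u : En n → ℝ) (Ω : Set (En n)) : Set (Set (En n)) :=
  {C | ∃ x ∈ Ω \ zeroSet u Ω, C = connectedComponentIn (Ω \ zeroSet u Ω) x}

open MeasureTheory

/-! ### A smooth radial averaging kernel -/

/-- The derivative of `expNegInvGlue`. -/
def glueDeriv (s : ℝ) : ℝ := s⁻¹ ^ 2 * expNegInvGlue s

lemma hasDerivAt_expNegInvGlue (s : ℝ) : HasDerivAt expNegInvGlue (glueDeriv s) s := by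
  simpa [glueDeriv] using expNegInvGlue.hasDerivAt_polynomial_eval_inv_mul 1 s

lemma contDiff_glueDeriv {m : ℕ∞} : ContDiff ℝ m glueDeriv := by
  have h := expNegInvGlue.contDiff_polynomial_eval_inv_mul (n := m) (Polynomial.X ^ 2)
  simp only [Polynomial.eval_pow, Polynomial.eval_X] at h
  exact h

lemma glueDeriv_nonneg (s : ℝ) : 0 ≤ glueDeriv s :=
  mul_nonneg (by positivity) (expNegInvGlue.nonneg s)

lemma glueDeriv_of_nonpos {s : ℝ} (hs : s ≤ 0) : glueDeriv s = 0 := by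
  simp [glueDeriv, expNegInvGlue.zero_of_nonpos hs]

lemma glueDeriv_pos {s : ℝ} (hs : 0 < s) : 0 < glueDeriv s :=
  mul_pos (by positivity) (expNegInvGlue.pos_of_pos hs)

/-- The unnormalised averaging kernel on the unit ball. -/
def rawKernel {n : ℕ} (z : En n) : ℝ := glueDeriv (1 - ‖z‖ ^ 2)

/-- A radial potential whose gradient is `-2 z` times the unnormalised kernel. -/
def kernelPotential {n : ℕ} (z : En n) : ℝ := expNegInvGlue (1 - ‖z‖ ^ 2)

section Kernel

variable {n : ℕ}

lemma contDiff_rawKernel {m : ℕ∞} : ContDiff ℝ m (rawKernel (n := n)) :=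
  contDiff_glueDeriv.comp (contDiff_const.sub (contDiff_norm_sq ℝ))

lemma contDiff_kernelPotential {m : ℕ∞} : ContDiff ℝ m (kernelPotential (n := n)) :=
  expNegInvGlue.contDiff.comp (contDiff_const.sub (contDiff_norm_sq ℝ))

lemma rawKernel_nonneg (z : En n) : 0 ≤ rawKernel z := glueDeriv_nonneg _

lemma rawKernel_of_one_le {z : En n} (hz : 1 ≤ ‖z‖) : rawKernel z = 0 :=
  glueDeriv_of_nonpos (by nlinarith)

lemma kernelPotential_of_one_le {z : En n} (hz : 1 ≤ ‖z‖) : kernelPotential z = 0 :=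
  expNegInvGlue.zero_of_nonpos (by nlinarith)

lemma hasCompactSupport_of_eq_zero {f : En n → ℝ} {r : ℝ} (h : ∀ z, r ≤ ‖z‖ → f z = 0) :
    HasCompactSupport f := by
  refine HasCompactSupport.intro (isCompact_closedBall (0 : En n) r) fun z hz => h z ?_
  rw [mem_closedBall_zero_iff, not_le] at hz
  exact hz.le

lemma hasCompactSupport_rawKernel : HasCompactSupport (rawKernel (n := n)) :=
  hasCompactSupport_of_eq_zero fun _ => rawKernel_of_one_le

lemma hasCompactSupport_kernelPotential : HasCompactSupport (kernelPotential (n := n)) :=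
  hasCompactSupport_of_eq_zero fun _ => kernelPotential_of_one_le

lemma fderiv_kernelPotential (z e : En n) :
    fderiv ℝ kernelPotential z e = -2 * inner ℝ z e * rawKernel z := by
  have h1 : HasFDerivAt (fun z : En n => 1 - ‖z‖ ^ 2) (-(2 • innerSL ℝ z)) z :=
    (hasStrictFDerivAt_norm_sq z).hasFDerivAt.const_sub 1
  have h2 := (hasDerivAt_expNegInvGlue (1 - ‖z‖ ^ 2)).comp_hasFDerivAt z h1
  have h3 : fderiv ℝ kernelPotential z = glueDeriv (1 - ‖z‖ ^ 2) • -(2 • innerSL ℝ z) := h2.fderiv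
  rw [h3]
  simp [rawKernel]
  ring

variable (n) in
/-- The total mass of the unnormalised kernel. -/
def kernelMass : ℝ := ∫ z : En n, rawKernel z

lemma integrable_rawKernel : Integrable (rawKernel (n := n)) :=
  (contDiff_rawKernel (m := 0)).continuous.integrable_of_hasCompactSupport
    hasCompactSupport_rawKernel

lemma kernelMass_pos : 0 < kernelMass n := by
  refine (contDiff_rawKernel (m := 0)).continuous.integral_pos_of_hasCompactSupport_nonneg_nonzero
    hasCompactSupport_rawKernel rawKernel_nonneg (x := 0) ?_
  exact (glueDeriv_pos (by simp)).ne'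

/-- The averaging kernel at scale `r`. -/
def kernel (r : ℝ) (z : En n) : ℝ := (r ^ n * kernelMass n)⁻¹ * rawKernel (r⁻¹ • z)

lemma contDiff_kernel {m : ℕ∞} (r : ℝ) : ContDiff ℝ m (kernel (n := n) r) :=
  contDiff_const.mul (contDiff_rawKernel.comp (contDiff_const_smul _))

lemma continuous_kernel (r : ℝ) : Continuous (kernel (n := n) r) :=
  (contDiff_kernel (m := 0) r).continuous

lemma kernel_nonneg {r : ℝ} (hr : 0 < r) (z : En n) : 0 ≤ kernel r z := by
  have := kernelMass_pos (n := n)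
  exact mul_nonneg (by positivity) (rawKernel_nonneg _)

lemma kernel_of_le {r : ℝ} (hr : 0 < r) {z : En n} (hz : r ≤ ‖z‖) : kernel r z = 0 := by
  rw [kernel, rawKernel_of_one_le, mul_zero]
  rw [norm_smul, norm_inv, Real.norm_of_nonneg hr.le, inv_mul_eq_div, le_div_iff₀ hr]
  simpa using hz

lemma kernel_neg (r : ℝ) (z : En n) : kernel r (-z) = kernel r z := by
  simp [kernel, rawKernel]

lemma hasCompactSupport_kernel {r : ℝ} (hr : 0 < r) : HasCompactSupport (kernel (n := n) r) :=
  hasCompactSupport_of_eq_zero fun _ => kernel_of_le hr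

lemma integral_kernel_mul {r : ℝ} (hr : 0 < r) (x : En n) (f : En n → ℝ) :
    ∫ z, kernel r (z - x) * f z = (kernelMass n)⁻¹ * ∫ y, rawKernel y * f (x + r • y) := by
  rw [← integral_add_right_eq_self _ x]
  have h := Measure.integral_comp_smul_of_nonneg volume
    (fun z : En n => kernel r (z + x - x) * f (z + x)) r (hR := hr.le)
  rw [finrank_euclideanSpace_fin, smul_eq_mul, eq_comm, inv_mul_eq_iff_eq_mul₀ (by positivity)] at h
  rw [h, ← integral_const_mul, ← integral_const_mul]
  congr 1
  ext y
  have := kernelMass_pos (n := n)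
  rw [kernel, add_sub_cancel_right, smul_smul, inv_mul_cancel₀ hr.ne', one_smul, add_comm x]
  field_simp

lemma integral_kernel {r : ℝ} (hr : 0 < r) (x : En n) : ∫ z, kernel r (z - x) = 1 := by
  have h := integral_kernel_mul hr x (fun _ => 1)
  simp only [mul_one] at h
  rw [h, ← kernelMass, inv_mul_cancel₀ kernelMass_pos.ne']

/-- Kernels at nearby centres are comparable when the scale is enlarged. -/
lemma exists_kernel_le (n : ℕ) : ∃ K : ℝ, 0 < K ∧ ∀ (r : ℝ) (x y z : En n), 0 < r →
    dist y x ≤ r / 4 → kernel (r / 4) (z - y) ≤ K * kernel r (z - x) := by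
  obtain ⟨A, hA⟩ := (contDiff_rawKernel (n := n) (m := 0)).continuous.bounded_above_of_compact_support
    hasCompactSupport_rawKernel
  have hc : 0 < expNegInvGlue (3 / 4) := expNegInvGlue.pos_of_pos (by norm_num)
  have hA0 : 0 ≤ A := (norm_nonneg _).trans (hA 0)
  have hm := kernelMass_pos (n := n)
  refine ⟨4 ^ n * (A + 1) / expNegInvGlue (3 / 4), by positivity, fun r x y z hr hxy => ?_⟩
  rcases le_or_gt (r / 4) ‖z - y‖ with h | h
  · rw [kernel_of_le (by positivity) h]
    exact mul_nonneg (by positivity) (kernel_nonneg hr _)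
  have hzx : ‖r⁻¹ • (z - x)‖ ≤ 1 / 2 := by
    have : ‖z - x‖ ≤ ‖z - y‖ + ‖y - x‖ := norm_sub_le_norm_sub_add_norm_sub _ _ _
    rw [dist_eq_norm] at hxy
    rw [norm_smul, norm_inv, Real.norm_of_nonneg hr.le, inv_mul_le_iff₀ hr]
    linarith
  have hlow : expNegInvGlue (3 / 4) ≤ rawKernel (r⁻¹ • (z - x)) := by
    set q := ‖r⁻¹ • (z - x)‖ with hq
    have hq0 : 0 ≤ q := norm_nonneg _
    have h1 : 3 / 4 ≤ 1 - q ^ 2 := by nlinarith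
    have h2 : 1 ≤ (1 - q ^ 2)⁻¹ ^ 2 :=
      one_le_pow₀ ((one_le_inv₀ (by linarith)).2 (by nlinarith))
    have h3 := expNegInvGlue.monotone h1
    rw [rawKernel, glueDeriv, ← hq]
    nlinarith
  have hup : rawKernel ((r / 4)⁻¹ • (z - y)) ≤ A + 1 :=
    ((le_abs_self _).trans (hA _)).trans (by linarith)
  calc kernel (r / 4) (z - y) ≤ ((r / 4) ^ n * kernelMass n)⁻¹ * (A + 1) := by
        unfold kernel; gcongr
    _ = 4 ^ n * (A + 1) / expNegInvGlue (3 / 4) *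
        ((r ^ n * kernelMass n)⁻¹ * expNegInvGlue (3 / 4)) := by
        field_simp
        rw [← mul_pow, div_mul_cancel₀ _ (by norm_num)]
    _ ≤ _ := by unfold kernel; gcongr

end Kernel


/-! ### The mean value property -/

section MeanValue

variable {n : ℕ}

/-- A function on a ball agrees on a smaller ball with a compactly supported function of the
same regularity. -/
lemma exists_cutoff {m : ℕ∞} {u : En n → ℝ} (hu : ContDiffOn ℝ m u (ball 0 1)) {ρ : ℝ}
    (hρ : 0 < ρ) (hρ1 : ρ < 1) :
    ∃ w : En n → ℝ, ContDiff ℝ m w ∧ HasCompactSupport w ∧ EqOn w u (ball 0 ρ) := by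
  let χ : ContDiffBump (0 : En n) := ⟨ρ, (1 + ρ) / 2, hρ, by linarith⟩
  refine ⟨fun z => χ z * u z, ?_, χ.hasCompactSupport.mul_right, fun z hz => ?_⟩
  · rw [contDiff_iff_contDiffAt]
    intro z
    by_cases hz : z ∈ ball (0 : En n) 1
    · exact χ.contDiffAt.mul (hu.contDiffAt (isOpen_ball.mem_nhds hz))
    · have hz' : z ∈ (closedBall (0 : En n) ((1 + ρ) / 2))ᶜ := by
        simp only [mem_ball_zero_iff, not_lt, mem_compl_iff, mem_closedBall_zero_iff, not_le] at hz ⊢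
        linarith
      refine (contDiffAt_const (c := (0 : ℝ))).congr_of_eventuallyEq ?_
      filter_upwards [isClosed_closedBall.isOpen_compl.mem_nhds hz'] with y hy
      rw [χ.zero_of_le_dist, zero_mul]
      simp only [mem_compl_iff, mem_closedBall, not_le] at hy
      exact hy.le
  · simp only
    rw [χ.one_of_mem_closedBall (ball_subset_closedBall hz), one_mul]

/-- The mean value property on the unit ball with respect to the kernels `kernel r`. -/
def HasMeanValue (u : En n → ℝ) : Prop :=
  ∀ (x : En n) (r : ℝ), 0 < r → ‖x‖ + r < 1 → u x = ∫ z, kernel r (z - x) * u z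

lemma laplacianAt_eq_sum (u : En n → ℝ) (x : En n) :
    laplacianAt u x = ∑ i : Fin n,
      fderiv ℝ (fderiv ℝ u) x (EuclideanSpace.single i 1) (EuclideanSpace.single i 1) := by
  simp [laplacianAt, iteratedFDeriv_two_apply]

lemma integral_rawKernel_mul_fderiv {w : En n → ℝ} (hw : ContDiff ℝ 2 w)
    (x : En n) (s : ℝ) :
    ∫ y, rawKernel y * fderiv ℝ w (x + s • y) y =
      s / 2 * ∫ y, kernelPotential y * laplacianAt w (x + s • y) := by
  have hw1 : ContDiff ℝ 1 (fderiv ℝ w) := hw.fderiv_right (by norm_num)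
  have hw2 : Continuous (fderiv ℝ (fderiv ℝ w)) := hw1.continuous_fderiv one_ne_zero
  have hK : Continuous (rawKernel (n := n)) := (contDiff_rawKernel (m := 0)).continuous
  have hP1 : ContDiff ℝ 1 (kernelPotential (n := n)) := contDiff_kernelPotential (m := 1)
  have hP : Continuous (kernelPotential (n := n)) := hP1.continuous
  have haff : Continuous fun y : En n => x + s • y := by fun_prop
  let b : Fin n → En n := fun i => EuclideanSpace.single i 1
  have hfd : ∀ i y, HasFDerivAt (fun y => fderiv ℝ w (x + s • y) (b i))
      (s • (fderiv ℝ (fderiv ℝ w) (x + s • y)).flip (b i)) y := by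
    intro i y
    have h1 : HasFDerivAt (fun y : En n => x + s • y) (s • ContinuousLinearMap.id ℝ (En n)) y :=
      ((hasFDerivAt_id y).const_smul s).const_add x
    have h2 := ((hw1.differentiable one_ne_zero (x + s • y)).hasFDerivAt.comp y h1).clm_apply
      (hasFDerivAt_const (b i) y)
    refine h2.congr_fderiv ?_
    ext v
    simp
  have hcont : ∀ i, Continuous fun y => fderiv ℝ w (x + s • y) (b i) := fun i =>
    (hw1.continuous.comp haff).clm_apply continuous_const
  have hcont2 : ∀ i, Continuous fun y =>
      fderiv ℝ (fderiv ℝ w) (x + s • y) (b i) (b i) := fun i =>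
    ((hw2.comp haff).clm_apply continuous_const).clm_apply continuous_const
  have hcontP : ∀ i, Continuous fun y : En n => fderiv ℝ kernelPotential y (b i) := fun i =>
    (hP1.continuous_fderiv one_ne_zero).clm_apply continuous_const
  have hint : ∀ i, Integrable fun y =>
      kernelPotential y * fderiv ℝ (fderiv ℝ w) (x + s • y) (b i) (b i) := fun i =>
    (hP.mul (hcont2 i)).integrable_of_hasCompactSupport hasCompactSupport_kernelPotential.mul_right
  have hint' : ∀ i, Integrable fun y =>
      fderiv ℝ kernelPotential y (b i) * fderiv ℝ w (x + s • y) (b i) := fun i =>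
    ((hcontP i).mul (hcont i)).integrable_of_hasCompactSupport
      ((hasCompactSupport_kernelPotential.fderiv_apply ℝ (b i)).mul_right)
  have hparts : ∀ i, ∫ y, fderiv ℝ kernelPotential y (b i) * fderiv ℝ w (x + s • y) (b i) =
      -(s * ∫ y, kernelPotential y * fderiv ℝ (fderiv ℝ w) (x + s • y) (b i) (b i)) := by
    intro i
    have h := integral_mul_fderiv_eq_neg_fderiv_mul_of_integrable (μ := volume)
      (f := kernelPotential) (g := fun y => fderiv ℝ w (x + s • y) (b i)) (v := b i)
      (hint' i) ?_ ?_ (fun y _ => hP1.differentiable one_ne_zero y)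
      (fun y _ => (hfd i y).differentiableAt)
    · rw [eq_comm, neg_eq_iff_eq_neg] at h
      rw [h, ← integral_const_mul]
      congr 2
      ext y
      rw [(hfd i y).fderiv]
      simp
      ring
    · refine ((hint i).const_mul s).congr (Eventually.of_forall fun y => ?_)
      simp only
      rw [(hfd i y).fderiv]
      simp
      ring
    · exact (hP.mul (hcont i)).integrable_of_hasCompactSupport
        hasCompactSupport_kernelPotential.mul_right
  have hexp : ∀ y, rawKernel y * fderiv ℝ w (x + s • y) y =
      ∑ i, -(1 / 2) * (fderiv ℝ kernelPotential y (b i) * fderiv ℝ w (x + s • y) (b i)) := by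
    intro y
    have hy : y = ∑ i, y i • b i := by
      ext j
      simp [b, Finset.sum_apply, Pi.single_apply]
    have hL : ∀ L : En n →L[ℝ] ℝ, L y = ∑ i, y i * L (b i) := fun L => by
      conv_lhs => rw [hy, map_sum]
      simp
    rw [hL, Finset.mul_sum]
    refine Finset.sum_congr rfl fun i _ => ?_
    rw [fderiv_kernelPotential]
    simp [b, EuclideanSpace.inner_single_right]
    ring
  simp_rw [hexp, laplacianAt_eq_sum, Finset.mul_sum]
  rw [integral_finsetSum _ fun i _ => (hint' i).const_mul _,
    integral_finsetSum _ fun i _ => hint i, Finset.mul_sum]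
  refine Finset.sum_congr rfl fun i _ => ?_
  rw [integral_const_mul, hparts]
  ring

lemma integral_rawKernel_mul_of_laplacian {w : En n → ℝ} (hw : ContDiff ℝ 2 w)
    (hs : HasCompactSupport w) {x : En n} {r : ℝ} (hr : 0 < r)
    (hlap : ∀ z ∈ ball x r, laplacianAt w z = 0) :
    ∫ y, rawKernel y * w (x + r • y) = kernelMass n * w x := by
  have hw1 : Continuous (fderiv ℝ w) := hw.continuous_fderiv two_ne_zero
  have hK : Continuous (rawKernel (n := n)) := (contDiff_rawKernel (m := 0)).continuous
  obtain ⟨A, hA⟩ := hw1.bounded_above_of_compact_support (hs.fderiv ℝ)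
  have hder : ∀ t : ℝ, HasDerivAt (fun t => ∫ y, rawKernel y * w (x + t • y))
      (∫ y, rawKernel y * fderiv ℝ w (x + t • y) y) t := by
    intro t
    refine (hasDerivAt_integral_of_dominated_loc_of_deriv_le (s := univ)
      (F := fun t y => rawKernel y * w (x + t • y))
      (F' := fun t y => rawKernel y * fderiv ℝ w (x + t • y) y)
      (bound := fun y => A * rawKernel y) univ_mem (Eventually.of_forall fun t' => ?_) ?_ ?_
      (Eventually.of_forall fun y t' _ => ?_) (integrable_rawKernel.const_mul A)
      (Eventually.of_forall fun y t' _ => ?_)).2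
    · have := hw.continuous
      exact (show Continuous fun y => rawKernel y * w (x + t' • y) by fun_prop).aestronglyMeasurable
    · have := hw.continuous
      exact (show Continuous fun y => rawKernel y * w (x + t • y) by
        fun_prop).integrable_of_hasCompactSupport hasCompactSupport_rawKernel.mul_right
    · exact (show Continuous fun y => rawKernel y * fderiv ℝ w (x + t • y) y by
        fun_prop).aestronglyMeasurable
    · rcases le_or_gt 1 ‖y‖ with hy | hy
      · simp [rawKernel_of_one_le hy]
      · have h1 := (fderiv ℝ w (x + t' • y)).le_of_opNorm_le (hA _) y
        have hA0 : 0 ≤ A := (norm_nonneg _).trans (hA 0)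
        rw [norm_mul, Real.norm_of_nonneg (rawKernel_nonneg y), mul_comm]
        exact mul_le_mul_of_nonneg_right (h1.trans (mul_le_of_le_one_right hA0 hy.le))
          (rawKernel_nonneg y)
    · have h1 : HasDerivAt (fun t : ℝ => x + t • y) y t' := by
        simpa using ((hasDerivAt_id t').smul_const y).const_add x
      exact (((hw.differentiable two_ne_zero _).hasFDerivAt).comp_hasDerivAt t' h1).const_mul _
  have hzero : ∀ t ∈ Ico 0 r, ∫ y, rawKernel y * fderiv ℝ w (x + t • y) y = 0 := by
    intro t ht
    rw [integral_rawKernel_mul_fderiv hw]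
    have : ∀ y, kernelPotential y * laplacianAt w (x + t • y) = 0 := by
      intro y
      rcases le_or_gt 1 ‖y‖ with hy | hy
      · rw [kernelPotential_of_one_le hy, zero_mul]
      · rw [hlap, mul_zero]
        rw [mem_ball, dist_eq_norm, add_sub_cancel_left, norm_smul, Real.norm_of_nonneg ht.1]
        exact (mul_le_of_le_one_right ht.1 hy.le).trans_lt ht.2
    simp [this]
  have h := constant_of_has_deriv_right_zero (a := 0) (b := r)
    (f := fun t => ∫ y, rawKernel y * w (x + t • y))
    (fun t _ => (hder t).continuousAt.continuousWithinAt)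
    (fun t ht => by simpa [hzero t ht] using (hder t).hasDerivWithinAt) r ⟨hr.le, le_rfl⟩
  simp only [zero_smul, add_zero] at h
  rw [h, integral_mul_const, kernelMass]

lemma kernel_mul_congr {u w : En n → ℝ} {x : En n} {r ρ : ℝ} (hr : 0 < r) (h : ‖x‖ + r ≤ ρ)
    (huw : EqOn w u (ball 0 ρ)) (z : En n) : kernel r (z - x) * w z = kernel r (z - x) * u z := by
  rcases le_or_gt r ‖z - x‖ with hz | hz
  · rw [kernel_of_le hr hz, zero_mul, zero_mul]
  · rw [huw]
    rw [mem_ball_zero_iff]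
    have := norm_le_norm_sub_add z x
    linarith

lemma HarmonicOnSet.hasMeanValue {u : En n → ℝ} (hu : HarmonicOnSet u (ball 0 1)) :
    HasMeanValue u := by
  intro x r hr hxr
  have hρ : 0 < (‖x‖ + r + 1) / 2 := by positivity
  obtain ⟨w, hw, hws, hwu⟩ := exists_cutoff (m := 2) hu.1 hρ (by linarith)
  have hball : ∀ z ∈ ball x r, z ∈ ball (0 : En n) ((‖x‖ + r + 1) / 2) := by
    intro z hz
    rw [mem_ball, dist_eq_norm] at hz
    rw [mem_ball_zero_iff]
    have := norm_le_norm_sub_add z x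
    linarith
  rw [← integral_congr_ae (Eventually.of_forall (kernel_mul_congr hr (by linarith) hwu)),
    integral_kernel_mul hr, integral_rawKernel_mul_of_laplacian hw hws hr,
    inv_mul_cancel_left₀ kernelMass_pos.ne', hwu (hball x (mem_ball_self hr))]
  intro z hz
  have hz' := hball z hz
  have heq : w =ᶠ[nhds z] u := hwu.eventuallyEq_of_mem (isOpen_ball.mem_nhds hz')
  rw [← hu.2 z (ball_subset_ball (by linarith) hz'), laplacianAt, laplacianAt,
    (Filter.EventuallyEq.iteratedFDeriv ℝ heq 2).eq_of_nhds]

end MeanValue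


section Regularity

variable {n : ℕ} {u : En n → ℝ}

/-- The derivative of a function in a fixed direction. -/
def dirDeriv (e : En n) (u : En n → ℝ) (x : En n) : ℝ := fderiv ℝ u x e

lemma integral_kernel_mul_eq_convolution (r : ℝ) (w : En n → ℝ) (x : En n) :
    ∫ z, kernel r (z - x) * w z =
      convolution (kernel r) w (ContinuousLinearMap.mul ℝ ℝ) volume x := by
  rw [convolution_def, ← integral_sub_left_eq_self _ volume x]
  congr 1
  ext t
  rw [sub_sub_cancel_left, kernel_neg, ContinuousLinearMap.mul_apply']

lemma integral_kernel_mul_eq_convolution' (r : ℝ) (w : En n → ℝ) (x : En n) :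
    ∫ z, kernel r (z - x) * w z =
      convolution w (kernel r) (ContinuousLinearMap.mul ℝ ℝ) volume x := by
  rw [convolution_def]
  congr 1
  ext t
  rw [← neg_sub, kernel_neg, mul_comm, ContinuousLinearMap.mul_apply']

lemma HasMeanValue.eq_integral_of_eqOn (hm : HasMeanValue u) {w : En n → ℝ} {x : En n} {r ρ : ℝ}
    (hr : 0 < r) (h : ‖x‖ + r ≤ ρ) (hρ : ρ < 1) (hwu : EqOn w u (ball 0 ρ)) :
    u x = ∫ z, kernel r (z - x) * w z := by
  rw [hm x r hr (h.trans_lt hρ)]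
  exact integral_congr_ae (Eventually.of_forall fun z => (kernel_mul_congr hr h hwu z).symm)

lemma HasMeanValue.eventually_eq_integral (hm : HasMeanValue u) {w : En n → ℝ} {x : En n} {r ρ : ℝ}
    (hr : 0 < r) (h : ‖x‖ + r < ρ) (hρ : ρ < 1) (hwu : EqOn w u (ball 0 ρ)) :
    ∀ᶠ y in nhds x, u y = ∫ z, kernel r (z - y) * w z := by
  have : ∀ᶠ y in nhds x, ‖y‖ + r < ρ :=
    (continuous_norm.add continuous_const).continuousAt.eventually_lt continuousAt_const h
  exact this.mono fun y hy => hm.eq_integral_of_eqOn hr hy.le hρ hwu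

lemma HasMeanValue.contDiffOn (hm : HasMeanValue u) (hc : ContinuousOn u (ball 0 1)) (m : ℕ∞) :
    ContDiffOn ℝ m u (ball 0 1) := by
  intro x hx
  rw [mem_ball_zero_iff] at hx
  have hx0 := norm_nonneg x
  have hr : 0 < (1 - ‖x‖) / 4 := by linarith
  obtain ⟨w, hw, hws, hwu⟩ := exists_cutoff (m := 0) (contDiffOn_zero.2 hc)
    (ρ := (1 + ‖x‖) / 2) (by linarith) (by linarith)
  have heq := hm.eventually_eq_integral (x := x) hr (by linarith) (by linarith) hwu
  simp_rw [integral_kernel_mul_eq_convolution'] at heq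
  have hconv := (hasCompactSupport_kernel hr).contDiff_convolution_right
    (ContinuousLinearMap.mul ℝ ℝ) (hw.continuous.locallyIntegrable (μ := volume))
    (contDiff_kernel (m := m) ((1 - ‖x‖) / 4))
  exact (hconv.contDiffAt.congr_of_eventuallyEq heq).contDiffWithinAt

lemma HasMeanValue.dirDeriv (hm : HasMeanValue u) (hc : ContinuousOn u (ball 0 1)) (e : En n) :
    HasMeanValue (dirDeriv e u) := by
  intro x r hr hxr
  have hx0 := norm_nonneg x
  obtain ⟨w, hw, hws, hwu⟩ := exists_cutoff (m := 1) (hm.contDiffOn hc 1)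
    (ρ := (‖x‖ + r + 1) / 2) (by positivity) (by linarith)
  have heq := hm.eventually_eq_integral (x := x) hr (by linarith) (by linarith) hwu
  simp_rw [integral_kernel_mul_eq_convolution] at heq
  have hder := hws.hasFDerivAt_convolution_right (ContinuousLinearMap.mul ℝ ℝ)
    ((continuous_kernel r).locallyIntegrable (μ := volume)) hw x
  have hint : Integrable fun t => ((ContinuousLinearMap.mul ℝ ℝ).precompR (En n))
      (kernel r t) (fderiv ℝ w (x - t)) := by
    refine Continuous.integrable_of_hasCompactSupport ?_ ?_
    · have h1 : Continuous (fderiv ℝ w) := hw.continuous_fderiv one_ne_zero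
      exact ((ContinuousLinearMap.continuous _).comp (continuous_kernel r)).clm_apply
        (h1.comp (continuous_const.sub continuous_id))
    · refine (hasCompactSupport_kernel hr).mono fun t ht => ?_
      rw [Function.mem_support] at ht ⊢
      contrapose! ht
      simp [ht]
  have hcongr : EqOn (_root_.dirDeriv e w) (_root_.dirDeriv e u) (ball 0 ((‖x‖ + r + 1) / 2)) := by
    intro z hz
    rw [_root_.dirDeriv, (hwu.eventuallyEq_of_mem (isOpen_ball.mem_nhds hz)).fderiv_eq,
      _root_.dirDeriv]
  rw [← integral_congr_ae (Eventually.of_forall (kernel_mul_congr hr (by linarith) hcongr)),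
    _root_.dirDeriv, Filter.EventuallyEq.fderiv_eq heq, hder.fderiv,
    integral_kernel_mul_eq_convolution, convolution_def, convolution_def,
    ContinuousLinearMap.integral_apply hint]
  rfl

lemma HasMeanValue.continuousOn_dirDeriv (hm : HasMeanValue u) (hc : ContinuousOn u (ball 0 1))
    (e : En n) : ContinuousOn (_root_.dirDeriv e u) (ball 0 1) :=
  ((hm.contDiffOn hc 1).continuousOn_fderiv_of_isOpen isOpen_ball le_rfl).clm_apply
    continuousOn_const

lemma HasMeanValue.iterate_dirDeriv (hm : HasMeanValue u) (hc : ContinuousOn u (ball 0 1))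
    (e : En n) (k : ℕ) : HasMeanValue ((_root_.dirDeriv e)^[k] u) ∧
      ContinuousOn ((_root_.dirDeriv e)^[k] u) (ball 0 1) := by
  induction k with
  | zero => exact ⟨hm, hc⟩
  | succ k ih =>
    rw [Function.iterate_succ_apply']
    exact ⟨ih.1.dirDeriv ih.2 e, ih.1.continuousOn_dirDeriv ih.2 e⟩

lemma exists_norm_fderiv_kernel_le (n : ℕ) : ∃ A : ℝ, 0 < A ∧ ∀ (r : ℝ) (z : En n), 0 < r →
    ‖fderiv ℝ (kernel r) z‖ ≤ A / (r ^ n * r) := by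
  have hcd : ContDiff ℝ 1 (rawKernel (n := n)) := contDiff_rawKernel (m := 1)
  obtain ⟨A, hA⟩ := (hcd.continuous_fderiv one_ne_zero).bounded_above_of_compact_support
    (hasCompactSupport_rawKernel.fderiv ℝ)
  have hA0 : 0 ≤ A := (norm_nonneg _).trans (hA 0)
  have hm := kernelMass_pos (n := n)
  refine ⟨(kernelMass n)⁻¹ * (A + 1), by positivity, fun r z hr => ?_⟩
  have h1 : HasFDerivAt (fun z : En n => r⁻¹ • z) (r⁻¹ • ContinuousLinearMap.id ℝ (En n)) z :=
    (hasFDerivAt_id z).const_smul r⁻¹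
  have h2 := ((hcd.differentiable one_ne_zero (r⁻¹ • z)).hasFDerivAt.comp z h1).const_mul
    (r ^ n * kernelMass n)⁻¹
  have h3 : fderiv ℝ (kernel r) z = _ := h2.fderiv
  rw [h3, ContinuousLinearMap.comp_smul, ContinuousLinearMap.comp_id, norm_smul, norm_smul,
    norm_inv, norm_inv, Real.norm_of_nonneg hr.le, Real.norm_of_nonneg (by positivity)]
  calc (r ^ n * kernelMass n)⁻¹ * (r⁻¹ * ‖fderiv ℝ rawKernel (r⁻¹ • z)‖)
      ≤ (r ^ n * kernelMass n)⁻¹ * (r⁻¹ * (A + 1)) := by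
        gcongr
        exact (hA _).trans (by linarith)
    _ = _ := by field_simp

lemma fderiv_kernel_of_lt {r : ℝ} (hr : 0 < r) {z : En n} (hz : r < ‖z‖) :
    fderiv ℝ (kernel r) z = 0 := by
  have h : kernel r =ᶠ[nhds z] fun _ => (0 : ℝ) := by
    filter_upwards [continuous_norm.continuousAt.eventually_const_lt hz] with y hy
    exact kernel_of_le hr hy.le
  rw [h.fderiv_eq]
  simp

/-- Interior gradient estimate. -/
lemma exists_gradient_estimate (n : ℕ) : ∃ C : ℝ, 0 < C ∧ ∀ (u : En n → ℝ), HasMeanValue u →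
    ContinuousOn u (ball 0 1) → ∀ (x : En n) (r S : ℝ), 0 < r → ‖x‖ + r < 1 →
    (∀ y ∈ closedBall x r, |u y| ≤ S) → ‖fderiv ℝ u x‖ ≤ C / r * S := by
  obtain ⟨A, hA, hAk⟩ := exists_norm_fderiv_kernel_le n
  have hV : 0 < volume.real (ball (0 : En n) 1) :=
    ENNReal.toReal_pos (measure_ball_pos volume _ one_pos).ne' measure_ball_lt_top.ne
  refine ⟨A * volume.real (ball (0 : En n) 1), by positivity, fun u hm hc x r S hr hxr hS => ?_⟩
  have hx0 := norm_nonneg x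
  have hS0 : 0 ≤ S := (abs_nonneg _).trans (hS x (mem_closedBall_self hr.le))
  obtain ⟨w, hw, hws, hwu⟩ := exists_cutoff (m := 0) (contDiffOn_zero.2 hc)
    (ρ := (‖x‖ + r + 1) / 2) (by positivity) (by linarith)
  have heq := hm.eventually_eq_integral (x := x) hr (by linarith) (by linarith) hwu
  simp_rw [integral_kernel_mul_eq_convolution'] at heq
  have hder := (hasCompactSupport_kernel hr).hasFDerivAt_convolution_right
    (ContinuousLinearMap.mul ℝ ℝ) (hw.continuous.locallyIntegrable (μ := volume))
    (contDiff_kernel (m := 1) r) x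
  rw [Filter.EventuallyEq.fderiv_eq heq, hder.fderiv, convolution_def]
  have hbound : ∀ t, ‖((ContinuousLinearMap.mul ℝ ℝ).precompR (En n)) (w t)
      (fderiv ℝ (kernel r) (x - t))‖ ≤
      (closedBall x r).indicator (fun _ => S * (A / (r ^ n * r))) t := by
    intro t
    by_cases ht : t ∈ closedBall x r
    · rw [indicator_of_mem ht]
      have h1 : ((ContinuousLinearMap.mul ℝ ℝ).precompR (En n)) (w t)
          (fderiv ℝ (kernel r) (x - t)) = w t • fderiv ℝ (kernel r) (x - t) := by
        ext v
        rfl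
      have h2 : w t = u t := by
        refine hwu ?_
        rw [mem_closedBall, dist_eq_norm] at ht
        rw [mem_ball_zero_iff]
        have := norm_le_norm_sub_add t x
        linarith
      rw [h1, norm_smul, h2]
      exact mul_le_mul (hS t ht) (hAk r _ hr) (norm_nonneg _) hS0
    · rw [indicator_of_notMem ht, fderiv_kernel_of_lt hr, map_zero, norm_zero]
      rwa [mem_closedBall, not_le, dist_comm, dist_eq_norm] at ht
  have hfin : volume (closedBall x r) ≠ ⊤ := measure_closedBall_lt_top.ne
  refine (norm_integral_le_of_norm_le ((integrable_indicator_iff measurableSet_closedBall).2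
    (integrableOn_const hfin)) (Eventually.of_forall hbound)).trans_eq ?_
  rw [integral_indicator measurableSet_closedBall, setIntegral_const,
    Measure.addHaar_real_closedBall _ _ hr.le, finrank_euclideanSpace_fin, smul_eq_mul]
  field_simp

/-- Interior estimates for iterated directional derivatives. -/
lemma exists_iterate_dirDeriv_estimate (n : ℕ) : ∃ C : ℝ, 0 < C ∧ ∀ (k : ℕ) (u : En n → ℝ),
    HasMeanValue u → ContinuousOn u (ball 0 1) → ∀ (e x : En n) (s S : ℝ), 0 < s →
    ‖x‖ + k * s < 1 → (∀ y ∈ closedBall x (k * s), |u y| ≤ S) →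
    |(dirDeriv e)^[k] u x| ≤ (C * ‖e‖ / s) ^ k * S := by
  obtain ⟨C, hC, hgrad⟩ := exists_gradient_estimate n
  refine ⟨C, hC, fun k => ?_⟩
  induction k with
  | zero => intro u _ _ e x s S hs _ hS; simpa using hS x (by simp)
  | succ k ih =>
    intro u hm hc e x s S hs hx hS
    push_cast at hx hS
    rw [Function.iterate_succ_apply, pow_succ, mul_assoc]
    refine ih _ (hm.dirDeriv hc e) (hm.continuousOn_dirDeriv hc e) e x s _ hs (by linarith) ?_
    intro y hy
    rw [mem_closedBall, dist_eq_norm] at hy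
    have hy1 := norm_le_norm_sub_add y x
    have h := hgrad u hm hc y s S hs (by linarith) fun z hz => hS z <| by
      rw [mem_closedBall, dist_eq_norm] at hz ⊢
      have := norm_sub_le_norm_sub_add_norm_sub z y x
      linarith
    refine ((fderiv ℝ u y).le_of_opNorm_le h e).trans_eq ?_
    ring

/-- Harnack inequality. -/
lemma exists_harnack (n : ℕ) : ∃ K : ℝ, 0 < K ∧ ∀ (u : En n → ℝ), HasMeanValue u →
    ContinuousOn u (ball 0 1) → ∀ (x : En n) (r : ℝ), 0 < r → ‖x‖ + r < 1 →
    (∀ y ∈ ball x r, 0 ≤ u y) → ∀ y ∈ closedBall x (r / 4), u y ≤ K * u x := by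
  obtain ⟨K, hK, hk⟩ := exists_kernel_le n
  refine ⟨K, hK, fun u hm hc x r hr hxr hpos y hy => ?_⟩
  have hx0 := norm_nonneg x
  obtain ⟨w, hw, hws, hwu⟩ := exists_cutoff (m := 0) (contDiffOn_zero.2 hc)
    (ρ := (‖x‖ + r + 1) / 2) (by positivity) (by linarith)
  have hy' := hy
  rw [mem_closedBall, dist_eq_norm] at hy'
  have hyx := norm_le_norm_sub_add y x
  have hint : ∀ (s : ℝ) (p : En n), Integrable fun z => kernel s (z - p) * w z := fun s p => by
    have h1 := continuous_kernel (n := n) s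
    have h2 := hw.continuous
    exact (show Continuous fun z => kernel s (z - p) * w z by
      fun_prop).integrable_of_hasCompactSupport hws.mul_left
  rw [hm.eq_integral_of_eqOn (x := y) (r := r / 4) (by positivity) (by linarith) (by linarith) hwu,
    hm.eq_integral_of_eqOn (x := x) hr (by linarith) (by linarith) hwu, ← integral_const_mul]
  refine integral_mono (hint _ _) ((hint _ _).const_mul K) fun z => ?_
  simp only
  rw [kernel_mul_congr (u := u) hr (by linarith) hwu, ← mul_assoc]
  rcases le_or_gt r ‖z - x‖ with hz | hz
  · rw [kernel_of_le hr hz, kernel_of_le (by positivity), zero_mul, mul_zero, zero_mul]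
    have := norm_sub_le_norm_sub_add_norm_sub z y x
    linarith
  · rw [kernel_mul_congr (u := u) (by positivity) (by linarith) hwu]
    exact mul_le_mul_of_nonneg_right (hk r x y z hr hy)
      (hpos z (by rwa [mem_ball, dist_eq_norm]))

end Regularity


/-! ### Taylor estimates and unique continuation -/

lemma abs_le_pow_div_factorial (N : ℕ) : ∀ (f : ℕ → ℝ → ℝ) (B : ℝ),
    (∀ j < N, ∀ t ∈ Icc (0 : ℝ) 1, HasDerivAt (f j) (f (j + 1) t) t) → (∀ j < N, f j 0 = 0) →
    (∀ t ∈ Icc (0 : ℝ) 1, |f N t| ≤ B) →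
    ∀ t ∈ Icc (0 : ℝ) 1, |f 0 t| ≤ B * (t ^ N / N.factorial) := by
  induction N with
  | zero => intro f B _ _ hB t ht; simpa using hB t ht
  | succ N ih =>
    intro f B hd h0 hB t ht
    have h1 := ih (fun j => f (j + 1)) B (fun j hj => hd (j + 1) (by lia))
      (fun j hj => h0 (j + 1) (by lia)) hB
    have hpow : ∀ t : ℝ, HasDerivAt (fun t => B * (t ^ (N + 1) / (N + 1).factorial))
        (B * (t ^ N / N.factorial)) t := fun t => by
      have := ((hasDerivAt_pow (N + 1) t).div_const ((N + 1).factorial : ℝ)).const_mul B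
      refine this.congr_deriv ?_
      rw [Nat.factorial_succ]
      push_cast
      have : (N.factorial : ℝ) ≠ 0 := by positivity
      field_simp
    exact image_norm_le_of_norm_deriv_right_le_deriv_boundary
      (fun t ht => (hd 0 (by lia) t ht).continuousAt.continuousWithinAt)
      (fun t ht => (hd 0 (by lia) t (Ico_subset_Icc_self ht)).hasDerivWithinAt)
      (by simp [h0 0 (by lia)]) hpow (fun t ht => h1 t (Ico_subset_Icc_self ht)) ht

lemma abs_sub_le_of_abs_deriv_le {f f' : ℝ → ℝ} {A : ℝ}
    (hd : ∀ t ∈ Icc (0 : ℝ) 1, HasDerivAt f (f' t) t) (hA : ∀ t ∈ Icc (0 : ℝ) 1, |f' t| ≤ A) :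
    ∀ t ∈ Icc (0 : ℝ) 1, |f t - f 0| ≤ A := by
  intro t ht
  have h := norm_image_sub_le_of_norm_deriv_le_segment'
    (fun t ht => (hd t ht).hasDerivWithinAt) (fun t ht => hA t (Ico_subset_Icc_self ht)) t ht
  have hA0 : 0 ≤ A := (abs_nonneg _).trans (hA t ht)
  rw [sub_zero] at h
  exact h.trans (mul_le_of_le_one_right hA0 ht.2)

lemma abs_sub_le_of_iterated_deriv_le (N : ℕ) : ∀ (f : ℕ → ℝ → ℝ) (A B : ℝ), 0 ≤ A →
    (∀ j ≤ N, ∀ t ∈ Icc (0 : ℝ) 1, HasDerivAt (f j) (f (j + 1) t) t) →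
    (∀ j, 1 ≤ j → j ≤ N → |f j 0| ≤ A) → (∀ t ∈ Icc (0 : ℝ) 1, |f (N + 1) t| ≤ B) →
    ∀ t ∈ Icc (0 : ℝ) 1, |f 0 t - f 0 0| ≤ N * A + B := by
  induction N with
  | zero =>
    intro f A B _ hd _ hB
    simpa using abs_sub_le_of_abs_deriv_le (hd 0 le_rfl) hB
  | succ N ih =>
    intro f A B hA hd h0 hB
    have h1 := ih (fun j => f (j + 1)) A B hA (fun j hj => hd (j + 1) (by lia))
      (fun j hj hj' => h0 (j + 1) (by lia) (by lia)) hB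
    refine abs_sub_le_of_abs_deriv_le (hd 0 (by lia)) fun t ht => ?_
    have h2 := h1 t ht
    have h3 := h0 1 le_rfl (by lia)
    simp only [zero_add] at h2 ⊢
    push_cast
    have h4 := abs_sub_abs_le_abs_sub (f 1 t) (f 1 0)
    linarith

section UniqueContinuation

variable {n : ℕ} {u : En n → ℝ}

lemma HasMeanValue.hasDerivAt_line (hm : HasMeanValue u) (hc : ContinuousOn u (ball 0 1))
    (x e : En n) (k : ℕ) {t : ℝ} (ht : x + t • e ∈ ball (0 : En n) 1) :
    HasDerivAt (fun t => (_root_.dirDeriv e)^[k] u (x + t • e))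
      ((_root_.dirDeriv e)^[k + 1] u (x + t • e)) t := by
  obtain ⟨hm', hc'⟩ := hm.iterate_dirDeriv hc e k
  have h1 : HasDerivAt (fun t : ℝ => x + t • e) e t := by
    simpa using ((hasDerivAt_id t).smul_const e).const_add x
  have h2 := ((hm'.contDiffOn hc' 1).differentiableOn one_ne_zero).differentiableAt
    (isOpen_ball.mem_nhds ht)
  rw [Function.iterate_succ_apply']
  exact h2.hasFDerivAt.comp_hasDerivAt t h1

lemma HasMeanValue.affine (hm : HasMeanValue u) (hc : ContinuousOn u (ball 0 1)) (a b : ℝ) :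
    HasMeanValue fun x => a * u x + b := by
  intro x r hr hxr
  have hx0 := norm_nonneg x
  obtain ⟨w, hw, hws, hwu⟩ := exists_cutoff (m := 0) (contDiffOn_zero.2 hc)
    (ρ := (‖x‖ + r + 1) / 2) (by positivity) (by linarith)
  have hk := continuous_kernel (n := n) r
  have hint : Integrable fun z => kernel r (z - x) * w z := by
    have h2 := hw.continuous
    exact (show Continuous fun z => kernel r (z - x) * w z by
      fun_prop).integrable_of_hasCompactSupport hws.mul_left
  have hint' : Integrable fun z => kernel r (z - x) :=
    (hk.integrable_of_hasCompactSupport (hasCompactSupport_kernel hr)).comp_sub_right x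
  have heq : ∀ z, kernel r (z - x) * (a * u z + b) =
      a * (kernel r (z - x) * w z) + b * kernel r (z - x) := fun z => by
    rw [kernel_mul_congr (u := u) hr (by linarith) hwu]
    ring
  simp_rw [heq]
  rw [integral_add (hint.const_mul a) (hint'.const_mul b), integral_const_mul, integral_const_mul,
    integral_kernel hr, ← hm.eq_integral_of_eqOn hr (by linarith) (by linarith) hwu, mul_one]

lemma iterate_dirDeriv_sub_const (e : En n) (c : ℝ) {k : ℕ} (hk : 1 ≤ k) :
    (dirDeriv e)^[k] (fun x => u x - c) = (dirDeriv e)^[k] u := by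
  obtain ⟨k, rfl⟩ := Nat.exists_eq_add_of_le' hk
  rw [Function.iterate_succ_apply, Function.iterate_succ_apply]
  congr 1
  ext x
  rw [dirDeriv, dirDeriv, fderiv_sub_const]

lemma exists_bound_of_continuousOn (hc : ContinuousOn u (ball 0 1)) {ρ : ℝ} (hρ : ρ < 1) :
    ∃ S : ℝ, 0 < S ∧ ∀ y ∈ closedBall (0 : En n) ρ, |u y| ≤ S := by
  obtain ⟨S, hS⟩ := (isCompact_closedBall (0 : En n) ρ).exists_bound_of_continuousOn
    (hc.mono (closedBall_subset_ball hρ))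
  exact ⟨max S 1, by positivity, fun y hy => (hS y hy).trans (le_max_left _ _)⟩

/-- A function with the mean value property vanishing to infinite order at a point vanishes
near that point. -/
lemma HasMeanValue.eventually_eq_zero (hm : HasMeanValue u) (hc : ContinuousOn u (ball 0 1))
    {x : En n} (hx : x ∈ ball (0 : En n) 1) (h0 : ∀ (e : En n) k, (_root_.dirDeriv e)^[k] u x = 0) :
    ∀ᶠ y in nhds x, u y = 0 := by
  obtain ⟨C, hC, hest⟩ := exists_iterate_dirDeriv_estimate n
  rw [mem_ball_zero_iff] at hx
  obtain ⟨R, hR, hxR⟩ : ∃ R, 0 < R ∧ ‖x‖ + 2 * R < 1 := ⟨(1 - ‖x‖) / 3, by linarith, by linarith⟩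
  obtain ⟨S, hS, hSb⟩ := exists_bound_of_continuousOn hc hxR
  have hδ : 0 < min R (R / (2 * C * Real.exp 1)) := lt_min hR (by positivity)
  filter_upwards [ball_mem_nhds x hδ] with y hy
  rw [mem_ball, dist_eq_norm, lt_min_iff, lt_div_iff₀ (by positivity)] at hy
  set e := y - x with he
  have hseg : ∀ t ∈ Icc (0 : ℝ) 1, ‖x + t • e‖ ≤ ‖x‖ + R := fun t ht => by
    refine (norm_add_le _ _).trans (add_le_add_right ?_ _)
    rw [norm_smul, Real.norm_of_nonneg ht.1]
    exact (mul_le_of_le_one_left (norm_nonneg _) ht.2).trans hy.1.le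
  have hbound : ∀ k : ℕ, 1 ≤ k → |u y| ≤ S * (1 / 2) ^ k := by
    intro k hk
    have hk0 : (0 : ℝ) < k := by exact_mod_cast hk
    have hkR : k * (R / k) = R := mul_div_cancel₀ _ hk0.ne'
    have h := abs_le_pow_div_factorial k (fun j t => (_root_.dirDeriv e)^[j] u (x + t • e))
      ((C * ‖e‖ / (R / k)) ^ k * S)
      (fun j _ t ht => hm.hasDerivAt_line hc x e j
        (by rw [mem_ball_zero_iff]; linarith [hseg t ht]))
      (fun j _ => by simpa using h0 e j)
      (fun t ht => hest k u hm hc e _ (R / k) S (by positivity)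
        (by rw [hkR]; linarith [hseg t ht])
        (fun z hz => hSb z <| by
          rw [hkR, mem_closedBall, dist_eq_norm] at hz
          rw [mem_closedBall_zero_iff]
          have := norm_le_norm_sub_add z (x + t • e)
          linarith [hseg t ht])) 1 ⟨zero_le_one, le_rfl⟩
    have hxy : x + (1 : ℝ) • e = y := by simp [he]
    simp only [Function.iterate_zero, id_eq, hxy, one_pow] at h
    refine h.trans ?_
    have hexp : (k : ℝ) ^ k / k.factorial ≤ Real.exp 1 ^ k := by
      rw [← Real.exp_nat_mul, mul_one]
      exact Real.pow_div_factorial_le_exp _ hk0.le k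
    have hhalf : C * ‖e‖ / R * Real.exp 1 ≤ 1 / 2 := by
      rw [div_mul_eq_mul_div, div_le_iff₀ hR]
      linarith [hy.2]
    calc (C * ‖e‖ / (R / k)) ^ k * S * (1 / k.factorial)
        = S * ((C * ‖e‖ / R) ^ k * ((k : ℝ) ^ k / k.factorial)) := by
          rw [show C * ‖e‖ / (R / k) = C * ‖e‖ / R * k by field_simp, mul_pow]
          ring
      _ ≤ S * ((C * ‖e‖ / R) ^ k * Real.exp 1 ^ k) := by gcongr
      _ ≤ S * (1 / 2) ^ k := by
          rw [← mul_pow]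
          gcongr
  have hlim : Tendsto (fun k : ℕ => S * (1 / 2 : ℝ) ^ k) atTop (nhds 0) := by
    simpa using (tendsto_pow_atTop_nhds_zero_of_lt_one (r := (1 / 2 : ℝ)) (by norm_num)
      (by norm_num)).const_mul S
  have h := ge_of_tendsto hlim (eventually_atTop.2 ⟨1, hbound⟩)
  exact abs_eq_zero.1 (le_antisymm h (abs_nonneg _))

lemma iterate_dirDeriv_eventuallyEq_zero (e : En n) {x : En n} (h : ∀ᶠ y in nhds x, u y = 0)
    (k : ℕ) : ∀ᶠ y in nhds x, (dirDeriv e)^[k] u y = 0 := by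
  induction k with
  | zero => exact h
  | succ k ih =>
    filter_upwards [ih.eventually_nhds] with y hy
    have hy' : (dirDeriv e)^[k] u =ᶠ[nhds y] fun _ => (0 : ℝ) := hy
    rw [Function.iterate_succ_apply', dirDeriv, hy'.fderiv_eq]
    simp

/-- Strong unique continuation. -/
lemma HasMeanValue.eqOn_zero (hm : HasMeanValue u) (hc : ContinuousOn u (ball 0 1))
    {x : En n} (hx : x ∈ ball (0 : En n) 1) (h0 : ∀ (e : En n) k, (_root_.dirDeriv e)^[k] u x = 0) :
    ∀ y ∈ ball (0 : En n) 1, u y = 0 := by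
  have hsub : ball (0 : En n) 1 ⊆ interior {y | u y = 0} := by
    refine (convex_ball (0 : En n) 1).isPreconnected.subset_of_closure_inter_subset
      isOpen_interior ⟨x, hx, mem_interior_iff_mem_nhds.2 (hm.eventually_eq_zero hc hx h0)⟩ ?_
    rintro y ⟨hy, hy1⟩
    refine mem_interior_iff_mem_nhds.2 (hm.eventually_eq_zero hc hy1 fun e k => ?_)
    have hcont := (hm.iterate_dirDeriv hc e k).2.continuousAt (isOpen_ball.mem_nhds hy1)
    by_contra hne
    obtain ⟨z, hz, hzi⟩ := ((mem_closure_iff_frequently.1 hy).and_eventually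
      (hcont.eventually_ne hne)).exists
    exact hzi (iterate_dirDeriv_eventuallyEq_zero e (mem_interior_iff_mem_nhds.1 hz) k).self_of_nhds
  exact fun y hy => interior_subset (s := {y | u y = 0}) (hsub hy)

/-- A non-constant function with the mean value property has, at each point, some non-vanishing
directional derivative of positive order. -/
lemma HasMeanValue.exists_iterate_dirDeriv_ne_zero (hm : HasMeanValue u)
    (hc : ContinuousOn u (ball 0 1)) (hnc : ¬ ∃ c : ℝ, ∀ x ∈ ball (0 : En n) 1, u x = c)
    {x : En n} (hx : x ∈ ball (0 : En n) 1) :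
    ∃ (N : ℕ) (e : En n), 1 ≤ N ∧ (_root_.dirDeriv e)^[N] u x ≠ 0 := by
  by_contra! h
  refine hnc ⟨u x, fun y hy => ?_⟩
  have hm' : HasMeanValue fun y => u y - u x := by
    simpa [sub_eq_add_neg] using hm.affine hc 1 (-u x)
  refine sub_eq_zero.1 (hm'.eqOn_zero (hc.sub continuousOn_const) hx (fun e k => ?_) y hy)
  rcases Nat.eq_zero_or_pos k with rfl | hk
  · simp
  · rw [iterate_dirDeriv_sub_const e _ hk]
    exact h k e hk

end UniqueContinuation


/-! ### Growth near the zero set -/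

section Growth

variable {n : ℕ} {u : En n → ℝ}

/-- If `|u|` barely exceeds `|u x|` on a ball around `x`, the derivatives of `u` at `x` are
small. -/
lemma exists_iterate_dirDeriv_le_of_almost_max (n : ℕ) : ∃ C K : ℝ, 0 < C ∧ 0 < K ∧
    ∀ (u : En n → ℝ), HasMeanValue u → ContinuousOn u (ball 0 1) → ∀ (x : En n) (r ε : ℝ),
    0 < r → ‖x‖ + r < 1 → 0 < ε → (∀ y ∈ ball x r, |u y| ≤ (1 + ε) * |u x|) →
    ∀ (N j : ℕ) (e : En n), 1 ≤ j → j ≤ N →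
    |(dirDeriv e)^[j] u x| ≤ (C * N * ‖e‖ / r) ^ j * (K * ε * |u x|) := by
  obtain ⟨C, hC, hest⟩ := exists_iterate_dirDeriv_estimate n
  obtain ⟨K, hK, hharnack⟩ := exists_harnack n
  refine ⟨4 * C, K, by positivity, hK, fun u hm hc x r ε hr hxr hε hmax N j e hj hjN => ?_⟩
  obtain ⟨σ, hσ, hσx⟩ : ∃ σ : ℝ, |σ| = 1 ∧ σ * u x = |u x| := by
    rcases le_total 0 (u x) with h | h
    · exact ⟨1, abs_one, by rw [one_mul, abs_of_nonneg h]⟩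
    · exact ⟨-1, by simp, by rw [neg_one_mul, abs_of_nonpos h]⟩
  have hσ2 : σ * σ = 1 := by rw [← abs_mul_abs_self, hσ, one_mul]
  have hsub : ∀ y, |u y - σ * ((1 + ε) * |u x|)| = abs (-σ * u y + (1 + ε) * |u x|) := fun y => by
    have h : -σ * u y + (1 + ε) * |u x| = -σ * (u y - σ * ((1 + ε) * |u x|)) := by
      linear_combination (-(1 + ε) * |u x|) * hσ2
    rw [h, abs_mul, abs_neg, hσ, one_mul]
  have hpos : ∀ y ∈ ball x r, 0 ≤ -σ * u y + (1 + ε) * |u x| := fun y hy => by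
    have h1 := le_abs_self (σ * u y)
    rw [abs_mul, hσ, one_mul] at h1
    linarith [hmax y hy]
  have hbound : ∀ y ∈ closedBall x (r / 4), |u y - σ * ((1 + ε) * |u x|)| ≤ K * ε * |u x| := by
    intro y hy
    have h := hharnack _ (hm.affine hc (-σ) ((1 + ε) * |u x|))
      ((continuousOn_const.mul hc).add continuousOn_const) x r hr hxr hpos y hy
    rw [hsub, abs_of_nonneg (hpos y (closedBall_subset_ball (by linarith) hy))]
    refine h.trans_eq ?_
    rw [neg_mul, hσx]
    ring
  have hN : (0 : ℝ) < N := by exact_mod_cast hj.trans hjN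
  have hjr : j * (r / (4 * N)) ≤ r / 4 := by
    have hjN' : (j : ℝ) ≤ N := by exact_mod_cast hjN
    rw [mul_div_assoc', div_le_div_iff₀ (by positivity) (by norm_num)]
    nlinarith
  have hm' : HasMeanValue fun y => u y - σ * ((1 + ε) * |u x|) := by
    simpa [sub_eq_add_neg] using hm.affine hc 1 (-(σ * ((1 + ε) * |u x|)))
  have h := hest j _ hm' (hc.sub continuousOn_const) e x (r / (4 * N)) (K * ε * |u x|)
    (by positivity) (by linarith) (fun y hy => hbound y (closedBall_subset_closedBall hjr hy))
  rw [iterate_dirDeriv_sub_const e _ hj] at h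
  refine h.trans_eq ?_
  congr 2
  field_simp

/-- Near a point where some directional derivative of positive order does not vanish, `|u|` grows
by a definite factor on balls of radius a quarter of the distance to the zero set. -/
lemma HasMeanValue.exists_growth_near (hm : HasMeanValue u) (hc : ContinuousOn u (ball 0 1))
    (hZ : (zeroSet u (ball 0 1) ∩ ball (0 : En n) (1 / 2)).Nonempty) {x₀ e : En n}
    (hx₀ : x₀ ∈ ball (0 : En n) 1) {N : ℕ} (hN : 1 ≤ N) (hne : (_root_.dirDeriv e)^[N] u x₀ ≠ 0) :
    ∃ ε : ℝ, 0 < ε ∧ ∀ᶠ x in nhds x₀, x ∈ ball (0 : En n) (1 / 4) → u x ≠ 0 →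
      ∃ y ∈ ball x (infDist x (zeroSet u (ball 0 1)) / 4), (1 + ε) * |u x| < |u y| := by
  obtain ⟨C, K, hC, hK, hder⟩ := exists_iterate_dirDeriv_le_of_almost_max n
  obtain ⟨C', hC', hest⟩ := exists_iterate_dirDeriv_estimate n
  obtain ⟨S, hS, hSb⟩ := exists_bound_of_continuousOn hc (ρ := 3 / 4) (by norm_num)
  set Z := zeroSet u (ball 0 1) with hZdef
  have hN0 : (0 : ℝ) < N := by exact_mod_cast hN
  set Q : ℝ := 1 + 8 * C * N with hQ
  have hQ1 : 1 ≤ Q := by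
    have : 0 ≤ 8 * C * N := by positivity
    linarith
  set L : ℝ := 2 * (8 * C' * N) ^ N * S + 8 ^ N * S with hL
  have hL0 : 0 < L := by positivity
  set c : ℝ := |(_root_.dirDeriv e)^[N] u x₀| / 2 with hcdef
  have hc0 : 0 < c := by positivity
  obtain ⟨ε, hε, hε1, hε2⟩ : ∃ ε : ℝ, 0 < ε ∧ N * (Q ^ N * (K * ε)) ≤ 1 / 2 ∧
      (C * N * ‖e‖ * 4) ^ N * (K * ε * L) < c := by
    have hA : Tendsto (fun ε : ℝ => N * (Q ^ N * (K * ε))) (nhdsWithin 0 (Ioi 0)) (nhds 0) :=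
      ((by fun_prop : Continuous fun ε : ℝ => N * (Q ^ N * (K * ε))).tendsto' 0 0
        (by simp)).mono_left nhdsWithin_le_nhds
    have hB : Tendsto (fun ε : ℝ => (C * N * ‖e‖ * 4) ^ N * (K * ε * L))
        (nhdsWithin 0 (Ioi 0)) (nhds 0) :=
      ((by fun_prop : Continuous fun ε : ℝ => (C * N * ‖e‖ * 4) ^ N * (K * ε * L)).tendsto' 0 0
        (by simp)).mono_left nhdsWithin_le_nhds
    obtain ⟨ε, ⟨h1, h2⟩, h3⟩ := ((((hA.eventually_lt_const (by norm_num : (0 : ℝ) < 1 / 2)).and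
      (hB.eventually_lt_const hc0)).and self_mem_nhdsWithin)).exists
    exact ⟨ε, h3, h1.le, h2⟩
  have hcont := ((hm.iterate_dirDeriv hc e N).2.continuousAt (isOpen_ball.mem_nhds hx₀)).abs
  refine ⟨ε, hε, ?_⟩
  filter_upwards [hcont.eventually_const_lt (show c < |(_root_.dirDeriv e)^[N] u x₀| by
    rw [hcdef]; linarith)] with x hxc hx hux
  by_contra! hmax
  rw [mem_ball_zero_iff] at hx
  obtain ⟨z₀, hz₀, hz₀'⟩ := hZ
  rw [mem_ball_zero_iff] at hz₀'
  have hM : 0 < |u x| := abs_pos.2 hux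
  set d := infDist x Z with hd
  have hx1 : x ∈ ball (0 : En n) 1 := by rw [mem_ball_zero_iff]; linarith
  have hd0 : 0 < d := by
    refine infDist_nonneg.lt_of_ne fun h0 => ?_
    have hcl : x ∈ closure Z := (mem_closure_iff_infDist_zero ⟨z₀, hz₀⟩).2 h0.symm
    obtain ⟨z, hz, hzne⟩ := ((mem_closure_iff_frequently.1 hcl).and_eventually
      ((hc.continuousAt (isOpen_ball.mem_nhds hx1)).eventually_ne hux)).exists
    exact hzne hz.2
  have hd1 : d < 3 / 4 := by
    have h1 : d ≤ dist x z₀ := infDist_le_dist_of_mem hz₀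
    rw [dist_eq_norm] at h1
    linarith [norm_sub_le x z₀]
  have hsmall := hder u hm hc x (d / 4) ε (by positivity) (by linarith) hε hmax N
  have hgrow : |u x| ≤ L * d ^ N := by
    rcases le_or_gt (1 / 8) d with hd8 | hd8
    · have h1 : |u x| ≤ S := hSb x (by rw [mem_closedBall_zero_iff]; linarith)
      have h2 : (1 : ℝ) ≤ (8 * d) ^ N := one_le_pow₀ (by linarith)
      calc |u x| ≤ S * (8 * d) ^ N := h1.trans (le_mul_of_one_le_right hS.le h2)
        _ = 8 ^ N * S * d ^ N := by rw [mul_pow]; ring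
        _ ≤ L * d ^ N := by
          gcongr
          rw [hL]
          have : 0 ≤ 2 * (8 * C' * N) ^ N * S := by positivity
          linarith
    · obtain ⟨z, hz, hxz⟩ := (infDist_lt_iff ⟨z₀, hz₀⟩).1 (show infDist x Z < 2 * d by linarith)
      set v := z - x with hv
      have hvd : ‖v‖ ≤ 2 * d := by
        rw [dist_comm, dist_eq_norm] at hxz
        exact hxz.le
      have hseg : ∀ t ∈ Icc (0 : ℝ) 1, ‖x + t • v‖ ≤ 1 / 2 := fun t ht => by
        refine (norm_add_le _ _).trans ?_
        rw [norm_smul, Real.norm_of_nonneg ht.1]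
        have := mul_le_of_le_one_left (norm_nonneg v) ht.2
        linarith
      obtain ⟨k, rfl⟩ := Nat.exists_eq_add_of_le' hN
      have hlow : ∀ j, 1 ≤ j → j ≤ k →
          |(_root_.dirDeriv v)^[j] u (x + (0 : ℝ) • v)| ≤ Q ^ (k + 1) * (K * ε * |u x|) := by
        intro j hj hjk
        rw [zero_smul, add_zero]
        refine (hsmall j v hj (by lia)).trans (mul_le_mul_of_nonneg_right ?_ (by positivity))
        have hq : C * (k + 1 : ℕ) * ‖v‖ / (d / 4) ≤ Q := by
          rw [div_le_iff₀ (by positivity), hQ]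
          have : C * (k + 1 : ℕ) * ‖v‖ ≤ C * (k + 1 : ℕ) * (2 * d) := by gcongr
          linarith
        exact (pow_le_pow_left₀ (by positivity) hq j).trans (pow_le_pow_right₀ hQ1 (by lia))
      have hhigh : ∀ t ∈ Icc (0 : ℝ) 1, |(_root_.dirDeriv v)^[k + 1] u (x + t • v)| ≤
          (8 * C' * (k + 1 : ℕ) * d) ^ (k + 1) * S := by
        intro t ht
        have hk4 : ((k + 1 : ℕ) : ℝ) * (1 / (4 * (k + 1 : ℕ))) = 1 / 4 := by field_simp
        refine (hest (k + 1) u hm hc v (x + t • v) (1 / (4 * (k + 1 : ℕ))) S (by positivity)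
          (by rw [hk4]; linarith [hseg t ht]) (fun y hy => hSb y ?_)).trans ?_
        · rw [hk4, mem_closedBall, dist_eq_norm] at hy
          rw [mem_closedBall_zero_iff]
          linarith [hseg t ht, norm_le_norm_sub_add y (x + t • v)]
        · gcongr
          rw [div_div_eq_mul_div, div_one]
          calc C' * ‖v‖ * (4 * (k + 1 : ℕ)) ≤ C' * (2 * d) * (4 * (k + 1 : ℕ)) := by gcongr
            _ = _ := by ring
      have h := abs_sub_le_of_iterated_deriv_le k
        (fun j t => (_root_.dirDeriv v)^[j] u (x + t • v)) _ _ (by positivity)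
        (fun j _ t ht => hm.hasDerivAt_line hc x v j
          (by rw [mem_ball_zero_iff]; linarith [hseg t ht])) hlow hhigh 1 ⟨zero_le_one, le_rfl⟩
      have hxz' : x + (1 : ℝ) • v = z := by simp [hv]
      simp only [Function.iterate_zero, id_eq, hxz', zero_smul, add_zero, hz.2, zero_sub,
        abs_neg] at h
      have h1 : (k : ℝ) * (Q ^ (k + 1) * (K * ε * |u x|)) ≤ 1 / 2 * |u x| := by
        calc (k : ℝ) * (Q ^ (k + 1) * (K * ε * |u x|))
            ≤ (k + 1 : ℕ) * (Q ^ (k + 1) * (K * ε * |u x|)) := by gcongr; lia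
          _ = (k + 1 : ℕ) * (Q ^ (k + 1) * (K * ε)) * |u x| := by ring
          _ ≤ 1 / 2 * |u x| := by gcongr
      have h2 : |u x| ≤ 2 * (8 * C' * (k + 1 : ℕ)) ^ (k + 1) * S * d ^ (k + 1) := by
        rw [mul_pow _ d] at h
        linarith
      refine h2.trans ?_
      gcongr
      rw [hL]
      have : 0 ≤ (8 : ℝ) ^ (k + 1) * S := by positivity
      linarith
  have h := hsmall N e hN le_rfl
  have hfinal : (C * N * ‖e‖ / (d / 4)) ^ N * (K * ε * |u x|) ≤
      (C * N * ‖e‖ * 4) ^ N * (K * ε * L) := by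
    calc (C * N * ‖e‖ / (d / 4)) ^ N * (K * ε * |u x|)
        ≤ (C * N * ‖e‖ / (d / 4)) ^ N * (K * ε * (L * d ^ N)) := by gcongr
      _ = (C * N * ‖e‖ / (d / 4) * d) ^ N * (K * ε * L) := by rw [mul_pow _ d]; ring
      _ = _ := by
        congr 2
        field_simp
  linarith

end Growth

theorem stmt12 (n : ℕ) (v : En n → ℝ)
    (hv : HarmonicOnSet v (ball 0 1))
    (hnc : ¬ ∃ c : ℝ, ∀ x ∈ ball (0 : En n) 1, v x = c)
    (hZ : (zeroSet v (ball 0 1) ∩ ball (0 : En n) (1/2)).Nonempty) :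
    ∃ C : ℝ, 1 < C ∧ ∀ x ∈ ball (0 : En n) (1/4), v x ≠ 0 →
      ∃ x' ∈ ball (0 : En n) (1/2),
        dist x x' ≤ (3/4) * infDist x (zeroSet v (ball 0 1)) ∧ C * |v x| ≤ |v x'| := by
  have hm := hv.hasMeanValue
  have hc := hv.1.continuousOn
  have key : ∃ ε : ℝ, 0 < ε ∧ ∀ x ∈ closedBall (0 : En n) (1 / 4),
      x ∈ ball (0 : En n) (1 / 4) → v x ≠ 0 →
      ∃ y ∈ ball x (infDist x (zeroSet v (ball 0 1)) / 4), (1 + ε) * |v x| < |v y| := by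
    refine (isCompact_closedBall (0 : En n) (1 / 4)).induction_on
      (p := fun s => ∃ ε : ℝ, 0 < ε ∧ ∀ x ∈ s, x ∈ ball (0 : En n) (1 / 4) → v x ≠ 0 →
        ∃ y ∈ ball x (infDist x (zeroSet v (ball 0 1)) / 4), (1 + ε) * |v x| < |v y|)
      ⟨1, one_pos, by simp⟩ ?_ ?_ ?_
    · rintro s t hst ⟨ε, hε, h⟩
      exact ⟨ε, hε, fun x hx => h x (hst hx)⟩
    · rintro s t ⟨ε, hε, h⟩ ⟨δ, hδ, h'⟩
      refine ⟨min ε δ, lt_min hε hδ, fun x hx hxb hvx => ?_⟩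
      rcases hx with hx | hx
      · obtain ⟨y, hy, hyv⟩ := h x hx hxb hvx
        refine ⟨y, hy, lt_of_le_of_lt ?_ hyv⟩
        gcongr
        exact min_le_left _ _
      · obtain ⟨y, hy, hyv⟩ := h' x hx hxb hvx
        refine ⟨y, hy, lt_of_le_of_lt ?_ hyv⟩
        gcongr
        exact min_le_right _ _
    · intro x hx
      have hx1 : x ∈ ball (0 : En n) 1 := closedBall_subset_ball (by norm_num) hx
      obtain ⟨N, e, hN, hne⟩ := hm.exists_iterate_dirDeriv_ne_zero hc hnc hx1
      obtain ⟨ε, hε, h⟩ := hm.exists_growth_near hc hZ hx1 hN hne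
      exact ⟨_, mem_nhdsWithin_of_mem_nhds h, ε, hε, fun y hy => hy⟩
  obtain ⟨ε, hε, h⟩ := key
  refine ⟨1 + ε, by linarith, fun x hx hvx => ?_⟩
  obtain ⟨y, hy, hyv⟩ := h x (ball_subset_closedBall hx) hx hvx
  obtain ⟨z₀, hz₀, hz₀'⟩ := hZ
  have hd : infDist x (zeroSet v (ball 0 1)) ≤ dist x z₀ := infDist_le_dist_of_mem hz₀
  have hd0 : 0 ≤ infDist x (zeroSet v (ball 0 1)) := infDist_nonneg
  rw [mem_ball_zero_iff] at hx hz₀'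
  rw [mem_ball, dist_comm] at hy
  rw [dist_eq_norm] at hd
  refine ⟨y, ?_, by linarith, hyv.le⟩
  have h1 := norm_sub_le x z₀
  have h2 := norm_le_norm_sub_add y x
  rw [dist_comm, dist_eq_norm] at hy
  rw [mem_ball_zero_iff]
  linarith
end
end

section
/- Let v be a non-constant harmonic function on the open unit ball B₁ ⊂ ℝⁿ with Z(v) ∩ B_{1/2} ≠ ∅, set Z = Z(v) and δ(x) = dist(x, Z). Then there exist constants β = β(v) > 0 and c = c(v) ∈ (0, 1/2) such that for every harmonic function u on B₁ with Z(u) = Z and every point x ∈ B_{1/8}, there exists a point y ∈ B_{1/2} with δ(y) ≥ c and |u(y)| ≥ |u(x)| · δ(x)^β. -/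
open Metric Set Filter

noncomputable section

open MeasureTheory Topology
open scoped ContDiff

theorem hasDerivAt_max_zero_sq (s : ℝ) :
    HasDerivAt (fun s : ℝ => max 0 s ^ 2) (2 * max 0 s) s := by
  rcases lt_trichotomy s 0 with hs | rfl | hs
  · rw [max_eq_left hs.le, mul_zero]
    refine (hasDerivAt_const s (0 : ℝ)).congr_of_eventuallyEq ?_
    filter_upwards [Iio_mem_nhds hs] with t ht
    simp [max_eq_left (le_of_lt (mem_Iio.1 ht))]
  · rw [max_self, mul_zero, hasDerivAt_iff_isLittleO]
    simp only [max_self, sub_zero, smul_zero]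
    refine Asymptotics.IsBigO.trans_isLittleO (g := fun t : ℝ => t ^ 2) ?_ ?_
    · refine Asymptotics.IsBigO.of_bound 1 (Filter.Eventually.of_forall fun t => ?_)
      simp only [Real.norm_eq_abs, abs_pow, sq_abs, one_mul, ne_eq, OfNat.ofNat_ne_zero,
        not_false_eq_true, zero_pow, sub_zero]
      rcases le_total t 0 with h | h
      · simp [max_eq_left h, sq_nonneg]
      · simp [max_eq_right h]
    · simpa using Asymptotics.isLittleO_pow_pow (𝕜 := ℝ) (m := 1) (n := 2) (by norm_num)
  · rw [max_eq_right hs.le]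
    have h : HasDerivAt (fun s : ℝ => s ^ 2) (2 * s) s := by
      simpa using hasDerivAt_pow 2 s
    refine h.congr_of_eventuallyEq ?_
    filter_upwards [Ioi_mem_nhds hs] with t ht
    simp [max_eq_right (le_of_lt (mem_Ioi.1 ht))]

/-- The weight `(1 - |y|²)₊`. -/
def ballWeight {n : ℕ} (y : En n) : ℝ := max 0 (1 - ‖y‖ ^ 2)

theorem continuous_ballWeight {n : ℕ} : Continuous (ballWeight (n := n)) := by
  unfold ballWeight; fun_prop

theorem ballWeight_nonneg {n : ℕ} (y : En n) : 0 ≤ ballWeight y := le_max_left _ _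

theorem ballWeight_le_one {n : ℕ} (y : En n) : ballWeight y ≤ 1 := by
  unfold ballWeight
  exact max_le zero_le_one (by nlinarith [sq_nonneg ‖y‖])

theorem ballWeight_pos {n : ℕ} {y : En n} (hy : ‖y‖ < 1) : 0 < ballWeight y := by
  unfold ballWeight
  exact lt_max_of_lt_right (by nlinarith [norm_nonneg y])

theorem ballWeight_eq_zero {n : ℕ} {y : En n} (hy : 1 ≤ ‖y‖) : ballWeight y = 0 := by
  unfold ballWeight
  exact max_eq_left (by nlinarith)

theorem le_ballWeight {n : ℕ} {y : En n} (hy : ‖y‖ ≤ 3 / 4) : 7 / 16 ≤ ballWeight y := by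
  unfold ballWeight
  exact le_max_of_le_right (by nlinarith [norm_nonneg y])

theorem hasCompactSupport_mul_ballWeight {n : ℕ} (f : En n → ℝ) :
    HasCompactSupport (fun y => f y * ballWeight y) := by
  refine HasCompactSupport.intro (isCompact_closedBall (0 : En n) 1) fun y hy => ?_
  rw [mem_closedBall_zero_iff, not_le] at hy
  simp [ballWeight_eq_zero hy.le]

theorem integrable_mul_ballWeight {n : ℕ} {f : En n → ℝ} (hf : Continuous f) :
    Integrable (fun y => f y * ballWeight y) :=
  (hf.mul continuous_ballWeight).integrable_of_hasCompactSupport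
    (hasCompactSupport_mul_ballWeight f)

theorem hasFDerivAt_ballWeight_sq {n : ℕ} (y : En n) :
    HasFDerivAt (fun y : En n => ballWeight y ^ 2)
      ((-4 * ballWeight y) • innerSL ℝ y) y := by
  have h1 : HasFDerivAt (fun y : En n => 1 - ‖y‖ ^ 2) (-(2 • innerSL ℝ y)) y :=
    (hasStrictFDerivAt_norm_sq y).hasFDerivAt.const_sub 1
  have h2 := (hasDerivAt_max_zero_sq (1 - ‖y‖ ^ 2)).comp_hasFDerivAt y h1
  refine h2.congr_fderiv ?_
  ext z
  simp [ballWeight]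
  ring

theorem integral_fderiv_mul_ballWeight_sq {n : ℕ} {f : En n → ℝ} (hf : ContDiff ℝ 1 f)
    (e : En n) :
    ∫ y, (4 * f y * inner ℝ y e) * ballWeight y
      = ∫ y, (fderiv ℝ f y e * ballWeight y) * ballWeight y := by
  have hd : ∀ y : En n, fderiv ℝ (fun y : En n => ballWeight y ^ 2) y e
      = -4 * ballWeight y * inner ℝ y e := fun y => by
    rw [(hasFDerivAt_ballWeight_sq y).fderiv]; simp
  have hfe : Continuous fun y => fderiv ℝ f y e :=
    (hf.continuous_fderiv one_ne_zero).clm_apply continuous_const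
  have hc := continuous_ballWeight (n := n)
  have hfc := hf.continuous
  have key := integral_mul_fderiv_eq_neg_fderiv_mul_of_integrable (μ := (volume : Measure (En n)))
    (f := f) (g := fun y : En n => ballWeight y ^ 2) (v := e) ?_ ?_ ?_
    (fun x _ => hf.differentiable one_ne_zero x)
    (fun x _ => (hasFDerivAt_ballWeight_sq x).differentiableAt)
  · simp only [hd] at key
    have h1 : ∀ y, (4 * f y * inner ℝ y e) * ballWeight y
      = -(f y * (-4 * ballWeight y * inner ℝ y e)) := fun y => by ring
    simp only [h1]
    rw [integral_neg, key, neg_neg]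
    congr 1; ext y; ring
  · refine (integrable_mul_ballWeight (f := fun y => fderiv ℝ f y e * ballWeight y)
      (by fun_prop)).congr (Filter.Eventually.of_forall fun y => ?_)
    simp only; ring
  · simp only [hd]
    refine (integrable_mul_ballWeight (f := fun y => -4 * f y * inner ℝ y e)
      (by fun_prop)).congr (Filter.Eventually.of_forall fun y => ?_)
    simp only; ring
  · refine (integrable_mul_ballWeight (f := fun y => f y * ballWeight y)
      (by fun_prop)).congr (Filter.Eventually.of_forall fun y => ?_)
    simp only; ring

theorem hasDerivAt_integral_mul_ballWeight {n : ℕ} {f f' : ℝ → En n → ℝ}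
    (hf : Continuous f.uncurry) (hf' : Continuous f'.uncurry)
    (hd : ∀ t y, HasDerivAt (fun s => f s y) (f' t y) t) (t : ℝ) :
    HasDerivAt (fun s => ∫ y, f s y * ballWeight y) (∫ y, f' t y * ballWeight y) t := by
  obtain ⟨C, hC⟩ := ((isCompact_closedBall t 1).prod
    (isCompact_closedBall (0 : En n) 1)).exists_bound_of_continuousOn hf'.continuousOn
  have hfs : ∀ s, Continuous (f s) := fun s => by
    have : f s = fun y => f.uncurry (s, y) := rfl
    rw [this]; fun_prop
  have hfs' : ∀ s, Continuous (f' s) := fun s => by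
    have : f' s = fun y => f'.uncurry (s, y) := rfl
    rw [this]; fun_prop
  refine (hasDerivAt_integral_of_dominated_loc_of_deriv_le
    (F := fun s y => f s y * ballWeight y) (F' := fun s y => f' s y * ballWeight y)
    (bound := fun y => C * ballWeight y) (closedBall_mem_nhds t one_pos) ?_ ?_ ?_ ?_ ?_ ?_).2
  · exact Filter.Eventually.of_forall fun s =>
      ((hfs s).mul continuous_ballWeight).aestronglyMeasurable
  · exact integrable_mul_ballWeight (hfs t)
  · exact ((hfs' t).mul continuous_ballWeight).aestronglyMeasurable
  · refine Filter.Eventually.of_forall fun y s hs => ?_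
    rcases le_total 1 ‖y‖ with hy | hy
    · simp [ballWeight_eq_zero hy]
    · rw [norm_mul, Real.norm_of_nonneg (ballWeight_nonneg y)]
      exact mul_le_mul_of_nonneg_right (hC (s, y) ⟨hs, by simpa using hy⟩) (ballWeight_nonneg y)
  · exact integrable_mul_ballWeight continuous_const
  · exact Filter.Eventually.of_forall fun y s _ => (hd s y).mul_const _

theorem clm_apply_eq_sum {n : ℕ} (L : En n →L[ℝ] ℝ) (y : En n) :
    L y = ∑ i, y i * L (EuclideanSpace.single i 1) := by
  conv_lhs => rw [← (EuclideanSpace.basisFun (Fin n) ℝ).sum_repr y]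
  simp [map_sum]

theorem laplacianAt_eq_sum_fderiv {n : ℕ} (u : En n → ℝ) (x : En n) :
    laplacianAt u x = ∑ i : Fin n, fderiv ℝ (fderiv ℝ u) x (EuclideanSpace.single i 1)
      (EuclideanSpace.single i 1) := by
  simp [laplacianAt, iteratedFDeriv_two_apply]

/-- The dilation generator is symmetric with respect to the weight on harmonic functions. -/
theorem integral_dilation_antisymm {n : ℕ} {u w : En n → ℝ} (hu : ContDiff ℝ 2 u)
    (hw : ContDiff ℝ 2 w) {R a b : ℝ} (hul : ∀ y ∈ ball (0 : En n) R, laplacianAt u y = 0)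
    (hwl : ∀ y ∈ ball (0 : En n) R, laplacianAt w y = 0) (ha : 0 < a) (hb : 0 < b)
    (haR : a ≤ R) (hbR : b ≤ R) :
    ∫ y, (a * fderiv ℝ u (a • y) y * w (b • y) - b * u (a • y) * fderiv ℝ w (b • y) y)
      * ballWeight y = 0 := by
  set e : Fin n → En n := fun i => EuclideanSpace.single i 1 with he
  have hu1 : ContDiff ℝ 1 (fderiv ℝ u) := hu.fderiv_right (by norm_num)
  have hw1 : ContDiff ℝ 1 (fderiv ℝ w) := hw.fderiv_right (by norm_num)
  have hu0 : ContDiff ℝ 1 u := hu.of_le (by norm_num)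
  have hw0 : ContDiff ℝ 1 w := hw.of_le (by norm_num)
  set f : Fin n → En n → ℝ := fun i y =>
    a * fderiv ℝ u (a • y) (e i) * w (b • y) - b * u (a • y) * fderiv ℝ w (b • y) (e i) with hf
  have hfc : ∀ i, ContDiff ℝ 1 (f i) := fun i => by
    have h1 : ContDiff ℝ 1 fun y : En n => fderiv ℝ u (a • y) (e i) :=
      (hu1.comp (contDiff_const_smul a)).clm_apply contDiff_const
    have h2 : ContDiff ℝ 1 fun y : En n => fderiv ℝ w (b • y) (e i) :=
      (hw1.comp (contDiff_const_smul b)).clm_apply contDiff_const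
    have h3 : ContDiff ℝ 1 fun y : En n => w (b • y) := hw0.comp (contDiff_const_smul b)
    have h4 : ContDiff ℝ 1 fun y : En n => u (a • y) := hu0.comp (contDiff_const_smul a)
    exact ((contDiff_const.mul h1).mul h3).sub ((contDiff_const.mul h4).mul h2)
  have hfd : ∀ i y, fderiv ℝ (f i) y (e i)
      = a ^ 2 * w (b • y) * fderiv ℝ (fderiv ℝ u) (a • y) (e i) (e i)
        - b ^ 2 * u (a • y) * fderiv ℝ (fderiv ℝ w) (b • y) (e i) (e i) := fun i y => by
    have sm : ∀ c : ℝ, HasFDerivAt (fun y : En n => c • y)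
        (c • ContinuousLinearMap.id ℝ (En n)) y := fun c => (hasFDerivAt_id y).const_smul c
    have g1 : HasFDerivAt (fun y : En n => u (a • y)) _ y :=
      (hu0.differentiable one_ne_zero (a • y)).hasFDerivAt.comp y (sm a)
    have g2 : HasFDerivAt (fun y : En n => w (b • y)) _ y :=
      (hw0.differentiable one_ne_zero (b • y)).hasFDerivAt.comp y (sm b)
    have g3 : HasFDerivAt (fun y : En n => fderiv ℝ u (a • y)) _ y :=
      (hu1.differentiable one_ne_zero (a • y)).hasFDerivAt.comp y (sm a)
    have g4 : HasFDerivAt (fun y : En n => fderiv ℝ w (b • y)) _ y :=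
      (hw1.differentiable one_ne_zero (b • y)).hasFDerivAt.comp y (sm b)
    have g3' := g3.clm_apply (hasFDerivAt_const (e i) y)
    have g4' := g4.clm_apply (hasFDerivAt_const (e i) y)
    have := ((g3'.const_mul a).mul g2).sub ((g1.const_mul b).mul g4')
    have h := this.fderiv
    have h' : fderiv ℝ (f i) y = _ := h
    rw [h']
    simp
    ring
  have key := fun i => integral_fderiv_mul_ballWeight_sq (hfc i) (e i)
  have hsum : ∀ y, (a * fderiv ℝ u (a • y) y * w (b • y) - b * u (a • y) * fderiv ℝ w (b • y) y)
      = ∑ i, f i y * y i := fun y => by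
    rw [clm_apply_eq_sum (fderiv ℝ u (a • y)) y, clm_apply_eq_sum (fderiv ℝ w (b • y)) y]
    simp only [hf, Finset.mul_sum, Finset.sum_mul, ← Finset.sum_sub_distrib]
    exact Finset.sum_congr rfl fun i _ => by ring
  have hin : ∀ (y : En n) i, inner ℝ y (e i) = y i := fun y i => by
    simp [he, EuclideanSpace.inner_single_right]
  have hlap : ∀ y, ∑ i, fderiv ℝ (f i) y (e i) * ballWeight y * ballWeight y = 0 := fun y => by
    rcases le_or_gt 1 ‖y‖ with hy | hy
    · simp [ballWeight_eq_zero hy]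
    · have hmem : ∀ c, 0 < c → c ≤ R → c • y ∈ ball (0 : En n) R := fun c hc hcR => by
        rw [mem_ball_zero_iff, norm_smul, Real.norm_of_nonneg hc.le]
        nlinarith [norm_nonneg y]
      have h1 := hul _ (hmem a ha haR)
      have h2 := hwl _ (hmem b hb hbR)
      rw [laplacianAt_eq_sum_fderiv] at h1 h2
      rw [← Finset.sum_mul, ← Finset.sum_mul]
      simp only [hfd, Finset.sum_sub_distrib, ← Finset.mul_sum]
      rw [h1, h2]; simp
  have hI1 : ∀ i, Integrable fun y => 4 * f i y * inner ℝ y (e i) * ballWeight y := fun i => by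
    have := (hfc i).continuous
    exact integrable_mul_ballWeight (by fun_prop)
  have hI2 : ∀ i, Integrable fun y =>
      fderiv ℝ (f i) y (e i) * ballWeight y * ballWeight y := fun i => by
    have h1 : Continuous fun y => fderiv ℝ (f i) y (e i) :=
      ((hfc i).continuous_fderiv one_ne_zero).clm_apply continuous_const
    have := continuous_ballWeight (n := n)
    exact integrable_mul_ballWeight (by fun_prop)
  have h4 : 4 * ∫ y, (a * fderiv ℝ u (a • y) y * w (b • y) -
      b * u (a • y) * fderiv ℝ w (b • y) y) * ballWeight y = 0 := by
    calc _ = ∫ y, ∑ i, 4 * f i y * inner ℝ y (e i) * ballWeight y := by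
          rw [← integral_const_mul]
          congr 1; ext y
          rw [hsum, Finset.sum_mul, Finset.mul_sum]
          exact Finset.sum_congr rfl fun i _ => by rw [hin]; ring
      _ = ∫ y, ∑ i, fderiv ℝ (f i) y (e i) * ballWeight y * ballWeight y := by
          rw [integral_finsetSum _ fun i _ => hI1 i, integral_finsetSum _ fun i _ => hI2 i]
          exact Finset.sum_congr rfl fun i _ => key i
      _ = 0 := by simp [hlap]
  linarith

/-- The weighted pairing of two dilated harmonic functions depends only on the product of the
dilation factors. -/
theorem integral_dilation_eq {n : ℕ} {u w : En n → ℝ} (hu : ContDiff ℝ 2 u)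
    (hw : ContDiff ℝ 2 w) {R r t : ℝ} (hul : ∀ y ∈ ball (0 : En n) R, laplacianAt u y = 0)
    (hwl : ∀ y ∈ ball (0 : En n) R, laplacianAt w y = 0) (hr : 0 < r) (ht : 0 ≤ t)
    (hR : r * Real.exp t ≤ R) :
    ∫ y, (u ((r * Real.exp t) • y) * w ((r * Real.exp (-t)) • y)) * ballWeight y
      = ∫ y, (u (r • y) * w (r • y)) * ballWeight y := by
  have hu0 := hu.continuous
  have hw0 := hw.continuous
  have hu1 := hu.continuous_fderiv two_ne_zero
  have hw1 := hw.continuous_fderiv two_ne_zero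
  have hder := hasDerivAt_integral_mul_ballWeight
    (f := fun s (y : En n) => u ((r * Real.exp s) • y) * w ((r * Real.exp (-s)) • y))
    (f' := fun s y => (r * Real.exp s) * fderiv ℝ u ((r * Real.exp s) • y) y
        * w ((r * Real.exp (-s)) • y)
      - (r * Real.exp (-s)) * u ((r * Real.exp s) • y)
        * fderiv ℝ w ((r * Real.exp (-s)) • y) y)
    (by simp only [Function.uncurry_def]; fun_prop)
    (by simp only [Function.uncurry_def]; fun_prop)
    (fun s y => by
      have e1 : HasDerivAt (fun s => (r * Real.exp s) • y) ((r * Real.exp s) • y) s :=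
        ((Real.hasDerivAt_exp s).const_mul r).smul_const y
      have e2 : HasDerivAt (fun s => (r * Real.exp (-s)) • y) (-(r * Real.exp (-s)) • y) s := by
        have := (((Real.hasDerivAt_exp (-s)).comp s (hasDerivAt_neg s)).const_mul r).smul_const y
        refine this.congr_deriv ?_
        congr 1; ring
      have d1 := ((hu.differentiable two_ne_zero _).hasFDerivAt.comp_hasDerivAt s e1)
      have d2 := ((hw.differentiable two_ne_zero _).hasFDerivAt.comp_hasDerivAt s e2)
      refine (d1.mul d2).congr_deriv ?_
      simp only [Function.comp_apply, neg_smul, map_neg, map_smul, smul_eq_mul]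
      ring)
  have hconst := constant_of_has_deriv_right_zero (a := 0) (b := t)
    (f := fun s => ∫ y, (u ((r * Real.exp s) • y) * w ((r * Real.exp (-s)) • y)) * ballWeight y)
    (fun s _ => (hder s).continuousAt.continuousWithinAt) (fun s hs => by
      have h := hder s
      have hsR : r * Real.exp s ≤ R :=
        (mul_le_mul_of_nonneg_left (Real.exp_le_exp.2 hs.2.le) hr.le).trans hR
      have hsR' : r * Real.exp (-s) ≤ R :=
        (mul_le_mul_of_nonneg_left (Real.exp_le_exp.2 (by linarith [hs.1])) hr.le).trans hsR
      rw [integral_dilation_antisymm hu hw hul hwl (by positivity) (by positivity) hsR hsR'] at h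
      exact h.hasDerivWithinAt)
  simpa using hconst t ⟨ht, le_rfl⟩

theorem laplacianAt_translate_sub_const {n : ℕ} (v : En n → ℝ) (x y : En n) (μ : ℝ) :
    laplacianAt (fun y => v (x + y) - μ) y = laplacianAt v (x + y) := by
  simp only [laplacianAt_eq_sum_fderiv]
  have : fderiv ℝ (fun y => v (x + y) - μ) = fun y => fderiv ℝ v (x + y) := by
    ext1 y
    rw [fderiv_sub_const, fderiv_comp_add_left]
  rw [this]
  simp only [fderiv_comp_add_left]

theorem contDiff_translate_sub_const {n : ℕ} {v : En n → ℝ} (hv : ContDiff ℝ 2 v) (x : En n)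
    (μ : ℝ) : ContDiff ℝ 2 (fun y => v (x + y) - μ) := by fun_prop

/-- The total mass of the weight `ballWeight`. -/
def ballMass (n : ℕ) : ℝ := ∫ y : En n, ballWeight y

theorem integral_mul_ballWeight_pos {n : ℕ} {f : En n → ℝ} (hf : Continuous f)
    (h0 : ∀ y, 0 ≤ f y) {y : En n} (hy : ‖y‖ < 1) (hfy : f y ≠ 0) :
    0 < ∫ y, f y * ballWeight y :=
  (hf.mul continuous_ballWeight).integral_pos_of_hasCompactSupport_nonneg_nonzero
    (hasCompactSupport_mul_ballWeight f) (fun y => mul_nonneg (h0 y) (ballWeight_nonneg y))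
    (mul_ne_zero hfy (ballWeight_pos hy).ne')

theorem ballMass_pos (n : ℕ) : 0 < ballMass n := by
  have := integral_mul_ballWeight_pos (n := n) (f := fun _ => 1) (y := 0) continuous_const
    (fun _ => zero_le_one) (by simp) one_ne_zero
  simpa [ballMass] using this

theorem continuous_parametric_integral_mul_ballWeight {n : ℕ} {X : Type*} [TopologicalSpace X]
    [FirstCountableTopology X] [LocallyCompactSpace X] {f : X → En n → ℝ}
    (hf : Continuous f.uncurry) : Continuous fun p => ∫ y, f p y * ballWeight y := by
  have h1 : ∀ p, ∫ y, f p y * ballWeight y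
      = ∫ y in closedBall (0 : En n) 1, f p y * ballWeight y := fun p => by
    refine (setIntegral_eq_integral_of_forall_compl_eq_zero fun y hy => ?_).symm
    rw [mem_closedBall_zero_iff, not_le] at hy
    simp [ballWeight_eq_zero hy.le]
  simp only [h1]
  have hw := continuous_ballWeight (n := n)
  exact continuous_parametric_integral_of_continuous
    (f := fun p y => f p y * ballWeight y)
    (hf.mul (hw.comp continuous_snd)) (isCompact_closedBall 0 1)

theorem integral_translate_mul_ballWeight {n : ℕ} {v : En n → ℝ} (hv : ContDiff ℝ 2 v)
    {x : En n} {r : ℝ} (hlap : ∀ y ∈ ball x r, laplacianAt v y = 0) (hr : 0 < r) :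
    ∫ y, v (x + r • y) * ballWeight y = v x * ballMass n := by
  have hu : ContDiff ℝ 2 (fun y => v (x + y)) := by fun_prop
  have hul : ∀ y ∈ ball (0 : En n) r, laplacianAt (fun y => v (x + y)) y = 0 := fun y hy => by
    have := laplacianAt_translate_sub_const v x y 0
    simp only [sub_zero] at this
    rw [this]
    exact hlap _ (by simpa using hy)
  have hone : ∀ y ∈ ball (0 : En n) r, laplacianAt (fun _ : En n => (1 : ℝ)) y = 0 :=
    fun y _ => by simp [laplacianAt_eq_sum_fderiv]
  set F : ℝ → ℝ := fun s => ∫ y, v (x + s • y) * ballWeight y with hF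
  have hFc : Continuous F := by
    have := hv.continuous
    exact continuous_parametric_integral_mul_ballWeight
      (f := fun s (y : En n) => v (x + s • y)) (by simp only [Function.uncurry_def]; fun_prop)
  have hconst : ∀ s ∈ Ioc 0 r, F s = F r := fun s hs => by
    have hle : 1 ≤ r / s := (one_le_div hs.1).2 hs.2
    have h := integral_dilation_eq hu contDiff_const hul hone hs.1 (Real.log_nonneg hle)
      (by rw [Real.exp_log (by linarith), mul_div_cancel₀ _ hs.1.ne'])
    rw [Real.exp_log (by linarith), mul_div_cancel₀ _ hs.1.ne'] at h
    simpa [hF] using h.symm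
  have h0 : F 0 = F r := by
    refine tendsto_nhds_unique (hFc.continuousAt.tendsto.mono_left
      (nhdsWithin_le_nhds (s := Ioi (0 : ℝ)))) ?_
    refine tendsto_const_nhds.congr' ?_
    filter_upwards [Ioc_mem_nhdsGT hr] with s hs using (hconst s hs).symm
  have : F 0 = v x * ballMass n := by simp [hF, ballMass, integral_const_mul]
  rw [← this, h0]

/-- The weighted mean square deviation of `v` from `μ` on the ball of radius `r` around `x`. -/
def sqDev {n : ℕ} (v : En n → ℝ) (x : En n) (μ r : ℝ) : ℝ :=
  ∫ y, (v (x + r • y) - μ) ^ 2 * ballWeight y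

theorem sqDev_nonneg {n : ℕ} (v : En n → ℝ) (x : En n) (μ r : ℝ) : 0 ≤ sqDev v x μ r :=
  integral_nonneg fun y => mul_nonneg (sq_nonneg _) (ballWeight_nonneg y)

theorem continuous_sqDev {n : ℕ} {v : En n → ℝ} (hv : Continuous v) :
    Continuous fun p : En n × ℝ × ℝ => sqDev v p.1 p.2.1 p.2.2 :=
  continuous_parametric_integral_mul_ballWeight
    (f := fun (p : En n × ℝ × ℝ) (y : En n) => (v (p.1 + p.2.2 • y) - p.2.1) ^ 2)
    (by simp only [Function.uncurry_def]; fun_prop)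

theorem eq_of_sqDev_eq_zero {n : ℕ} {v : En n → ℝ} (hv : Continuous v) {x : En n} {μ r : ℝ}
    (hr : 0 < r) (h : sqDev v x μ r = 0) {y : En n} (hy : y ∈ ball x r) : v y = μ := by
  by_contra hne
  refine (integral_mul_ballWeight_pos (f := fun y => (v (x + r • y) - μ) ^ 2) (by fun_prop)
    (fun y => sq_nonneg _) (y := r⁻¹ • (y - x)) ?_ ?_).ne' h
  · rw [norm_smul, norm_inv, Real.norm_of_nonneg hr.le, inv_mul_lt_iff₀ hr, mul_one]
    simpa [dist_eq_norm] using hy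
  · rw [smul_inv_smul₀ hr.ne']
    simpa [sub_eq_zero] using hne

theorem sq_integral_mul_ballWeight_le {n : ℕ} {f g : En n → ℝ} (hf : Continuous f)
    (hg : Continuous g) :
    (∫ y, (f y * g y) * ballWeight y) ^ 2
      ≤ (∫ y, f y ^ 2 * ballWeight y) * ∫ y, g y ^ 2 * ballWeight y := by
  have i1 := integrable_mul_ballWeight (hf.pow 2)
  have i2 := integrable_mul_ballWeight (hg.pow 2)
  have i3 := integrable_mul_ballWeight (hf.mul hg)
  simp only [Pi.mul_apply, Pi.pow_apply] at i1 i2 i3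
  have := discrim_le_zero (a := ∫ y, g y ^ 2 * ballWeight y)
    (b := 2 * ∫ y, (f y * g y) * ballWeight y) (c := ∫ y, f y ^ 2 * ballWeight y) fun c => by
      have h : 0 ≤ ∫ y, (c * g y + f y) ^ 2 * ballWeight y :=
        integral_nonneg fun y => mul_nonneg (sq_nonneg _) (ballWeight_nonneg y)
      have h2 : ∫ y, (c * g y + f y) ^ 2 * ballWeight y
          = ∫ y, ((c * c) * (g y ^ 2 * ballWeight y)
            + (2 * c) * ((f y * g y) * ballWeight y) + f y ^ 2 * ballWeight y) := by
        congr 1; ext y; ring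
      have i4 : Integrable fun y => (c * c) * (g y ^ 2 * ballWeight y)
          + (2 * c) * ((f y * g y) * ballWeight y) := (i2.const_mul _).add (i3.const_mul _)
      rw [h2, integral_add i4 i1, integral_add (i2.const_mul _) (i3.const_mul _), integral_const_mul,
        integral_const_mul] at h
      linarith
  unfold discrim at this
  linarith

/-- Three-ball inequality: `sqDev` is logarithmically convex. -/
theorem sqDev_sq_le {n : ℕ} {v : En n → ℝ} (hv : ContDiff ℝ 2 v) {x : En n} {μ r s t : ℝ}
    (hlap : ∀ y ∈ ball x t, laplacianAt v y = 0) (hr : 0 < r) (hrt : r ≤ t)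
    (hst : r ^ 2 = s * t) :
    sqDev v x μ r ^ 2 ≤ sqDev v x μ s * sqDev v x μ t := by
  have hu := contDiff_translate_sub_const hv x μ
  have hul : ∀ y ∈ ball (0 : En n) t, laplacianAt (fun y => v (x + y) - μ) y = 0 :=
    fun y hy => by
      rw [laplacianAt_translate_sub_const]
      exact hlap _ (by simpa using hy)
  have ht : 0 < t := hr.trans_le hrt
  have hle : 1 ≤ t / r := (one_le_div hr).2 hrt
  have e1 : r * Real.exp (Real.log (t / r)) = t := by
    rw [Real.exp_log (by linarith), mul_div_cancel₀ _ hr.ne']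
  have e2 : r * Real.exp (-Real.log (t / r)) = s := by
    rw [Real.exp_neg, Real.exp_log (by linarith), inv_div]
    field_simp
    linarith
  have h := integral_dilation_eq hu hu hul hul hr (Real.log_nonneg hle) e1.le
  rw [e1, e2] at h
  have hc := hu.continuous
  have h2 := sq_integral_mul_ballWeight_le
    (f := fun y => v (x + t • y) - μ) (g := fun y => v (x + s • y) - μ)
    (by have := hv.continuous; fun_prop) (by have := hv.continuous; fun_prop)
  rw [h] at h2
  simp only [sqDev]
  simp only [← sq] at h2
  rwa [mul_comm] at h2

theorem integral_translate_eq_scaled {n : ℕ} (f : En n → ℝ) (x : En n) {r : ℝ} (hr : 0 < r) :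
    ∫ y, f (x + r • y) * ballWeight y
      = (r ^ n)⁻¹ * ∫ p, f p * ballWeight (r⁻¹ • (p - x)) := by
  have h1 := Measure.integral_comp_smul_of_nonneg (volume : Measure (En n))
    (fun q => f (x + q) * ballWeight (r⁻¹ • q)) r (hR := hr.le)
  simp only [inv_smul_smul₀ hr.ne', finrank_euclideanSpace, Fintype.card_fin, smul_eq_mul] at h1
  rw [h1, ← integral_add_left_eq_self (μ := volume)
    (fun p => f p * ballWeight (r⁻¹ • (p - x))) x]
  simp

/-- Comparison of weighted integrals of a nonnegative function over nested balls. -/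
theorem integral_translate_le_of_ball_subset {n : ℕ} {f : En n → ℝ} (hf : Continuous f)
    {x x' : En n} {r m : ℝ} (hr : 0 < r) (hm : 0 < m)
    (h0 : ∀ p ∈ ball x' (m * r), 0 ≤ f p)
    (hsub : ball x r ⊆ ball x' (3 / 4 * (m * r))) :
    ∫ y, f (x + r • y) * ballWeight y
      ≤ 16 / 7 * m ^ n * ∫ y, f (x' + (m * r) • y) * ballWeight y := by
  have hw := continuous_ballWeight (n := n)
  have norm_lt : ∀ {c : ℝ} (_ : 0 < c) (p q : En n) (k : ℝ),
      ‖c⁻¹ • (p - q)‖ < k ↔ p ∈ ball q (k * c) := fun {c} hc p q k => by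
    rw [norm_smul, norm_inv, Real.norm_of_nonneg hc.le, inv_mul_lt_iff₀ hc, mem_ball,
      dist_eq_norm, mul_comm]
  have hcs : ∀ (c : ℝ) (_ : 0 < c) (q : En n),
      Integrable fun p => f p * ballWeight (c⁻¹ • (p - q)) := fun c hc q => by
    refine Continuous.integrable_of_hasCompactSupport (by fun_prop)
      (HasCompactSupport.intro (isCompact_closedBall q c) fun p hp => ?_)
    have : ¬ ‖c⁻¹ • (p - q)‖ < 1 := by
      rw [norm_lt hc, one_mul]
      exact fun h => hp (ball_subset_closedBall h)
    rw [ballWeight_eq_zero (not_lt.1 this), mul_zero]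
  have hmr : 0 < m * r := mul_pos hm hr
  rw [integral_translate_eq_scaled f x hr, integral_translate_eq_scaled f x' hmr]
  have hle : ∫ p, f p * ballWeight (r⁻¹ • (p - x))
      ≤ ∫ p, 16 / 7 * (f p * ballWeight ((m * r)⁻¹ • (p - x'))) := by
    refine integral_mono (hcs r hr x) ((hcs _ hmr x').const_mul _) fun p => ?_
    by_cases hp : p ∈ ball x r
    · have h1 := ballWeight_le_one (r⁻¹ • (p - x))
      have h2 := le_ballWeight ((norm_lt hmr p x' (3 / 4)).2 (hsub hp)).le
      have h3 : 0 ≤ f p := h0 p (ball_subset_ball (by linarith) (hsub hp))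
      simp only
      nlinarith [mul_le_mul_of_nonneg_left h1 h3, mul_le_mul_of_nonneg_left h2 h3]
    · have h1 : ¬ ‖r⁻¹ • (p - x)‖ < 1 := by rwa [norm_lt hr, one_mul]
      simp only
      rw [ballWeight_eq_zero (not_lt.1 h1), mul_zero]
      by_cases hp' : p ∈ ball x' (m * r)
      · have := mul_nonneg (h0 p hp') (ballWeight_nonneg ((m * r)⁻¹ • (p - x')))
        linarith
      · have h2 : ¬ ‖(m * r)⁻¹ • (p - x')‖ < 1 := by rwa [norm_lt hmr, one_mul]
        rw [ballWeight_eq_zero (not_lt.1 h2)]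
        simp
  rw [integral_const_mul] at hle
  calc _ ≤ (r ^ n)⁻¹ * (16 / 7 * ∫ p, f p * ballWeight ((m * r)⁻¹ • (p - x'))) := by gcongr
    _ = _ := by
      rw [mul_pow]
      field_simp

/-- Harnack inequality. -/
theorem harnack {n : ℕ} {f : En n → ℝ} (hf : ContDiff ℝ 2 f) {a b : En n} {s : ℝ} (hs : 0 < s)
    (hlap : ∀ y ∈ ball a (3 * s), laplacianAt f y = 0) (h0 : ∀ y ∈ ball a (3 * s), 0 ≤ f y)
    (hab : dist b a ≤ s) : f b ≤ 16 / 7 * 3 ^ n * f a := by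
  have h := integral_translate_le_of_ball_subset hf.continuous (x := b) hs three_pos h0
    (ball_subset_ball' (by linarith))
  rw [integral_translate_mul_ballWeight hf (fun y hy => hlap y
    (ball_subset_ball' (by linarith) hy)) hs,
    integral_translate_mul_ballWeight hf hlap (by linarith)] at h
  have := ballMass_pos n
  rw [← mul_assoc] at h
  exact le_of_mul_le_mul_right h this

theorem sqDev_eq_zero {n : ℕ} {v : En n → ℝ} {x : En n} {μ r : ℝ} (hr : 0 < r)
    (h : ∀ y ∈ ball x r, v y = μ) : sqDev v x μ r = 0 := by
  unfold sqDev
  rw [integral_eq_zero_of_ae]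
  refine Filter.Eventually.of_forall fun y => ?_
  rcases le_or_gt 1 ‖y‖ with hy | hy
  · simp [ballWeight_eq_zero hy]
  · have : v (x + r • y) = μ := h _ (by
      rw [mem_ball, dist_eq_norm, add_sub_cancel_left, norm_smul, Real.norm_of_nonneg hr.le]
      nlinarith)
    simp [this]

/-- Unique continuation on concentric balls. -/
theorem eq_const_on_ball_of_eq_const {n : ℕ} {v : En n → ℝ} (hv : ContDiff ℝ 2 v) {x : En n}
    {μ s T : ℝ} (hlap : ∀ y ∈ ball x T, laplacianAt v y = 0) (hs : 0 < s)
    (h : ∀ y ∈ ball x s, v y = μ) : ∀ y ∈ ball x T, v y = μ := by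
  intro y hy
  by_cases hys : y ∈ ball x s
  · exact h y hys
  obtain ⟨t, hyt, htT⟩ := exists_between (mem_ball.1 hy)
  have hst : s < t := lt_of_le_of_lt (by simpa using hys) hyt
  have hcont : Continuous fun r => sqDev v x μ r :=
    (continuous_sqDev hv.continuous).comp (f := fun r : ℝ => (x, μ, r)) (by fun_prop)
  have hK : IsCompact (Icc s t ∩ {r | sqDev v x μ r = 0}) :=
    isCompact_Icc.inter_right (isClosed_eq hcont continuous_const)
  obtain ⟨S, ⟨hS, hS0⟩, hmax⟩ := hK.exists_isGreatest ⟨s, ⟨le_rfl, hst.le⟩, sqDev_eq_zero hs h⟩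
  have hSpos : 0 < S := hs.trans_le hS.1
  have hSt : S = t := by
    refine le_antisymm hS.2 ?_
    have hroot : Real.sqrt (S * t) ^ 2 = S * t := Real.sq_sqrt (by nlinarith)
    have hle1 : S ≤ Real.sqrt (S * t) := Real.le_sqrt_of_sq_le (by nlinarith [hS.2])
    have hle2 : Real.sqrt (S * t) ≤ t := Real.sqrt_le_iff.2 ⟨by linarith, by nlinarith [hS.2]⟩
    have h1 := sqDev_sq_le hv (μ := μ) (fun z hz => hlap z (ball_subset_ball htT.le hz))
      (hSpos.trans_le hle1) hle2 hroot
    rw [hS0.out, zero_mul] at h1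
    have h2 : sqDev v x μ (Real.sqrt (S * t)) = 0 := by nlinarith
    have h3 := hmax ⟨⟨hS.1.trans hle1, hle2⟩, h2⟩
    have h4 : S * t ≤ S * S := by nlinarith
    exact le_of_mul_le_mul_left h4 hSpos
  rw [hSt] at hS0
  exact eq_of_sqDev_eq_zero hv.continuous (hs.trans hst) hS0 hyt

theorem doubling_of_three_point {h : ℝ → ℝ} {m M D : ℝ} {N : ℕ} (hm : 0 < m) (hMD : M ≤ D * m)
    (hD : 1 ≤ D) (hDN : D ≤ 32 ^ N) (hpos : ∀ r, 0 < r → r ≤ 1 / 2 → 0 < h r)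
    (h3 : ∀ r, 0 < r → r ≤ 1 / 64 → h r ^ 2 ≤ h (r / 32) * h (32 * r))
    (hlow : ∀ r ∈ Icc (1 / 2048 : ℝ) (1 / 2), m ≤ h r)
    (hup : ∀ r ∈ Icc (1 / 2048 : ℝ) (1 / 2), h r ≤ M) {r : ℝ} (hr : 0 < r) (hr' : r ≤ 1 / 64) :
    h (32 * r) ≤ D * h r ∧ m * r ^ N ≤ h r := by
  have base : ∀ r : ℝ, 1 / 2048 ≤ r → r ≤ 1 / 64 → h (32 * r) ≤ D * h r ∧ m * r ^ N ≤ h r := by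
    intro r h1 h2
    have hl := hlow r ⟨h1, by linarith⟩
    refine ⟨(hup _ ⟨by linarith, by linarith⟩).trans (hMD.trans ?_), le_trans ?_ hl⟩
    · exact mul_le_mul_of_nonneg_left hl (by linarith)
    · exact mul_le_of_le_one_right hm.le (pow_le_one₀ (by linarith) (by linarith))
  have main : ∀ k : ℕ, ∀ r : ℝ, 0 < r → r ≤ 1 / 64 → 1 / 2048 ≤ 32 ^ k * r →
      h (32 * r) ≤ D * h r ∧ m * r ^ N ≤ h r := by
    intro k
    induction k with
    | zero => intro r _ h2 h1; exact base r (by simpa using h1) h2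
    | succ k ih =>
      intro r h0 h2 h1
      rcases le_or_gt (1 / 2048) r with hb | hb
      · exact base r hb h2
      obtain ⟨i1, i2⟩ := ih (32 * r) (by linarith) (by linarith)
        (by rw [pow_succ] at h1; linarith)
      have hlc := h3 (32 * r) (by linarith) (by linarith)
      rw [mul_div_cancel_left₀ _ (by norm_num)] at hlc
      have p1 := hpos r h0 (by linarith)
      have p2 := hpos (32 * r) (by linarith) (by linarith)
      have hd : h (32 * r) ≤ D * h r := by
        have : h (32 * r) * h (32 * r) ≤ D * h r * h (32 * r) := by
          nlinarith [mul_le_mul_of_nonneg_left i1 p1.le]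
        exact le_of_mul_le_mul_right this p2
      refine ⟨hd, ?_⟩
      rw [mul_pow] at i2
      have h5 : D * (m * r ^ N) ≤ D * h r := by
        refine le_trans ?_ (i2.trans hd)
        have : 0 ≤ m * r ^ N := by positivity
        nlinarith
      exact le_of_mul_le_mul_left h5 (by linarith)
  obtain ⟨k, hk⟩ := pow_unbounded_of_one_lt (1 / 2048 / r) (by norm_num : (1 : ℝ) < 32)
  exact main k r hr hr' ((div_lt_iff₀ hr).1 hk).le

theorem sqDev_pos_of_not_const {n : ℕ} {v : En n → ℝ} (hv : ContDiff ℝ 2 v) {R : ℝ}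
    (hR : 7 / 8 ≤ R) (hlap : ∀ y ∈ ball (0 : En n) R, laplacianAt v y = 0)
    (hnc : ¬ ∃ c : ℝ, ∀ x ∈ ball (0 : En n) R, v x = c) {x : En n}
    (hx : x ∈ closedBall (0 : En n) (1 / 4)) (μ : ℝ) {r : ℝ} (hr : 0 < r) :
    0 < sqDev v x μ r := by
  refine (sqDev_nonneg v x μ r).lt_of_ne' fun h => hnc ⟨μ, ?_⟩
  have hx0 : dist x 0 ≤ 1 / 4 := hx
  have h1 : ∀ y ∈ ball x (R - 1 / 4), v y = μ :=
    eq_const_on_ball_of_eq_const hv (fun y hy => hlap y (ball_subset_ball' (by linarith) hy)) hr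
      fun y hy => eq_of_sqDev_eq_zero hv.continuous hr h hy
  refine eq_const_on_ball_of_eq_const hv hlap (s := R - 1 / 2) (by linarith) fun y hy => h1 y ?_
  exact ball_subset_ball' (by rw [dist_comm]; linarith) hy

theorem exists_uniform_doubling {n : ℕ} {v : En n → ℝ} (hv : ContDiff ℝ 2 v) {R : ℝ}
    (hR : 7 / 8 ≤ R) (hlap : ∀ y ∈ ball (0 : En n) R, laplacianAt v y = 0)
    (hnc : ¬ ∃ c : ℝ, ∀ x ∈ ball (0 : En n) R, v x = c) (V : ℝ) :
    ∃ m > 0, ∃ D ≥ 1, ∃ N : ℕ, ∀ x ∈ closedBall (0 : En n) (1 / 4), ∀ μ ∈ Icc (-V) V,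
      ∀ r, 0 < r → r ≤ 1 / 64 →
        sqDev v x μ (32 * r) ≤ D * sqDev v x μ r ∧ m * r ^ N ≤ sqDev v x μ r := by
  have hK : IsCompact (closedBall (0 : En n) (1 / 4) ×ˢ (Icc (-V) V) ×ˢ
      (Icc (1 / 2048 : ℝ) (1 / 2))) :=
    (isCompact_closedBall _ _).prod (isCompact_Icc.prod isCompact_Icc)
  have hc := (continuous_sqDev hv.continuous).continuousOn
    (s := closedBall (0 : En n) (1 / 4) ×ˢ (Icc (-V) V) ×ˢ (Icc (1 / 2048 : ℝ) (1 / 2)))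
  obtain ⟨m, hm, hlow⟩ := hK.exists_forall_le' (a := 0) hc fun p hp =>
    sqDev_pos_of_not_const hv hR hlap hnc hp.1 p.2.1
      (lt_of_lt_of_le (by norm_num) hp.2.2.1)
  obtain ⟨M, hM⟩ := hK.exists_bound_of_continuousOn hc
  obtain ⟨N, hN⟩ := pow_unbounded_of_one_lt (max 1 (M / m)) (by norm_num : (1 : ℝ) < 32)
  refine ⟨m, hm, max 1 (M / m), le_max_left _ _, N, fun x hx μ hμ r hr hr' => ?_⟩
  refine doubling_of_three_point (h := sqDev v x μ) (M := M) hm ?_ (le_max_left _ _) hN.le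
    (fun s hs _ => sqDev_pos_of_not_const hv hR hlap hnc hx μ hs) ?_
    (fun s hs => hlow (x, μ, s) ⟨hx, hμ, hs⟩)
    (fun s hs => (le_abs_self _).trans (hM (x, μ, s) ⟨hx, hμ, hs⟩)) hr hr'
  · rw [← div_le_iff₀ hm]
    exact le_max_right _ _
  · intro s hs hs'
    have hx0 : dist x 0 ≤ 1 / 4 := hx
    exact sqDev_sq_le hv (fun y hy => hlap y (ball_subset_ball' (by linarith) hy)) hs
      (by linarith) (by ring)

/-- Growth of a positive harmonic function near a zero, under a doubling condition. -/
theorem exists_growth_of_doubling {n : ℕ} {g : En n → ℝ} (hg : ContDiff ℝ 2 g) {x z : En n}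
    {δ D ε : ℝ} (hδ : 0 < δ) (hlap : ∀ y ∈ ball x (8 * δ), laplacianAt g y = 0)
    (h0 : ∀ y ∈ ball x δ, 0 ≤ g y) (hgx : 0 < g x) (hz : dist z x < 2 * δ) (hgz : g z = 0)
    (hD : sqDev g x (g x) (8 * δ) ≤ D * sqDev g x (g x) (δ / 4)) (hD0 : 0 ≤ D)
    (hεD : 16 / 7 * 4 ^ n * D * ε < 1) :
    ∃ x', dist x' x < δ / 4 ∧ (1 + ε) * g x < g x' := by
  by_contra! hcon
  have hcg := hg.continuous
  have hJ := ballMass_pos n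
  have hw := continuous_ballWeight (n := n)
  have hmean := integral_translate_mul_ballWeight hg (x := x) (r := δ / 4)
    (fun y hy => hlap y (ball_subset_ball (by linarith) hy)) (by linarith)
  have hup : sqDev g x (g x) (δ / 4) ≤ ε * g x ^ 2 * ballMass n := by
    have hpt : ∀ y, (g (x + (δ / 4) • y) - g x) ^ 2 * ballWeight y
        ≤ (ε * g x ^ 2) * ballWeight y + (-((1 - ε) * g x)) *
          ((g (x + (δ / 4) • y) - g x) * ballWeight y) := fun y => by
      rcases le_or_gt 1 ‖y‖ with hy | hy
      · simp [ballWeight_eq_zero hy]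
      · have hd : x + (δ / 4) • y ∈ ball x (δ / 4) := by
          rw [mem_ball, dist_eq_norm, add_sub_cancel_left, norm_smul,
            Real.norm_of_nonneg (by linarith)]
          nlinarith
        have b1 := hcon _ hd
        have b2 := h0 _ (ball_subset_ball (by linarith) hd)
        rw [← mul_assoc, ← add_mul]
        refine mul_le_mul_of_nonneg_right ?_ (ballWeight_nonneg y)
        nlinarith
    have i1 : Integrable fun y => (g (x + (δ / 4) • y) - g x) * ballWeight y :=
      integrable_mul_ballWeight (by fun_prop)
    have i2 : Integrable fun y : En n => (ε * g x ^ 2) * ballWeight y :=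
      integrable_mul_ballWeight continuous_const
    have hzero : ∫ y, (g (x + (δ / 4) • y) - g x) * ballWeight y = 0 := by
      simp only [sub_mul]
      rw [integral_sub (integrable_mul_ballWeight (by fun_prop))
        (integrable_mul_ballWeight continuous_const), hmean, integral_const_mul]
      simp [ballMass]
    have h := integral_mono (integrable_mul_ballWeight (by fun_prop))
      (i2.add (i1.const_mul (-((1 - ε) * g x)))) hpt
    simp only [Pi.add_apply] at h
    rw [integral_add i2 (i1.const_mul _), integral_const_mul, integral_const_mul, hzero,
      mul_zero, add_zero] at h
    exact h
  have hlow : g x ^ 2 * ballMass n ≤ sqDev g z (g x) (2 * δ) := by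
    have h1 := sq_integral_mul_ballWeight_le (f := fun y => g (z + (2 * δ) • y) - g x)
      (g := fun _ : En n => (1 : ℝ)) (by fun_prop) continuous_const
    have hm := integral_translate_mul_ballWeight hg (x := z) (r := 2 * δ)
      (fun y hy => hlap y (ball_subset_ball' (by linarith) hy)) (by linarith)
    have h2 : ∫ y, (g (z + (2 * δ) • y) - g x) * 1 * ballWeight y = - (g x * ballMass n) := by
      simp only [mul_one, sub_mul]
      rw [integral_sub (integrable_mul_ballWeight (by fun_prop))
        (integrable_mul_ballWeight continuous_const), hm, hgz, integral_const_mul]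
      simp [ballMass]
    rw [h2] at h1
    simp only [one_pow, one_mul] at h1
    have h3 : g x ^ 2 * ballMass n * ballMass n ≤ sqDev g z (g x) (2 * δ) * ballMass n := by
      unfold sqDev
      calc _ = (-(g x * ballMass n)) ^ 2 := by ring
        _ ≤ _ := h1
    exact le_of_mul_le_mul_right h3 hJ
  have hcmp := integral_translate_le_of_ball_subset
    (f := fun y => (g y - g x) ^ 2) (by fun_prop) (x := z) (x' := x) (r := 2 * δ) (m := 4)
    (by linarith) (by norm_num) (fun _ _ => sq_nonneg _) (ball_subset_ball' (by linarith))
  rw [show 4 * (2 * δ) = 8 * δ by ring] at hcmp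
  change sqDev g z (g x) (2 * δ) ≤ 16 / 7 * 4 ^ n * sqDev g x (g x) (8 * δ) at hcmp
  have hpos : 0 < g x ^ 2 * ballMass n := by positivity
  have hC : (0 : ℝ) < 16 / 7 * 4 ^ n := by positivity
  have : g x ^ 2 * ballMass n ≤ (16 / 7 * 4 ^ n * D * ε) * (g x ^ 2 * ballMass n) :=
    calc _ ≤ 16 / 7 * 4 ^ n * sqDev g x (g x) (8 * δ) := hlow.trans hcmp
      _ ≤ 16 / 7 * 4 ^ n * (D * (ε * g x ^ 2 * ballMass n)) := by
        gcongr
        exact hD.trans (by gcongr)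
      _ = _ := by ring
  nlinarith

/-- Łojasiewicz-type lower bound from a lower bound on the mean square. -/
theorem le_sq_of_le_sqDev {n : ℕ} {g : En n → ℝ} (hg : ContDiff ℝ 2 g) {x : En n} {δ A : ℝ}
    (hδ : 0 < δ) (hlap : ∀ y ∈ ball x δ, laplacianAt g y = 0) (h0 : ∀ y ∈ ball x δ, 0 ≤ g y)
    (hA : A ≤ sqDev g x 0 (δ / 4)) : A ≤ (16 / 7 * 3 ^ n) ^ 2 * g x ^ 2 * ballMass n := by
  refine hA.trans ?_
  have hcg := hg.continuous
  unfold sqDev ballMass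
  rw [← integral_const_mul]
  refine integral_mono (integrable_mul_ballWeight (by fun_prop))
    ((integrable_mul_ballWeight (f := fun _ => 1) continuous_const).congr ?_ |>.const_mul _) ?_
  · exact Filter.Eventually.of_forall fun y => by simp
  intro y
  rcases le_or_gt 1 ‖y‖ with hy | hy
  · simp [ballWeight_eq_zero hy]
  simp only [sub_zero]
  refine mul_le_mul_of_nonneg_right ?_ (ballWeight_nonneg y)
  have hd : dist (x + (δ / 4) • y) x ≤ δ / 4 := by
    rw [dist_eq_norm, add_sub_cancel_left, norm_smul, Real.norm_of_nonneg (by linarith)]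
    nlinarith
  rw [← mul_pow]
  refine pow_le_pow_left₀ (h0 _ ?_) (harnack hg (s := δ / 4) (by linarith)
    (fun y hy => hlap y (ball_subset_ball (by linarith) hy))
    (fun y hy => h0 y (ball_subset_ball (by linarith) hy)) hd) 2
  rw [mem_ball]; linarith

theorem forall_pos_or_forall_neg_on_ball {n : ℕ} {f : En n → ℝ} (hf : Continuous f) {x : En n}
    {δ : ℝ} (h : ∀ y ∈ ball x δ, f y ≠ 0) :
    ∃ σ : ℝ, (σ = 1 ∨ σ = -1) ∧ ∀ y ∈ ball x δ, 0 < σ * f y := by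
  by_cases hpos : ∀ y ∈ ball x δ, 0 < f y
  · exact ⟨1, Or.inl rfl, fun y hy => by simpa using hpos y hy⟩
  refine ⟨-1, Or.inr rfl, fun y hy => ?_⟩
  push Not at hpos
  obtain ⟨p, hp, hfp⟩ := hpos
  by_contra hy0
  obtain ⟨q, hq, hq0⟩ := (convex_ball x δ).isPreconnected.intermediate_value hp hy
    hf.continuousOn ⟨hfp, by linarith⟩
  exact h q hq hq0

theorem laplacianAt_const_mul {n : ℕ} {v : En n → ℝ} (hv : ContDiff ℝ 2 v) (σ : ℝ) (y : En n) :
    laplacianAt (fun y => σ * v y) y = σ * laplacianAt v y := by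
  simp only [laplacianAt_eq_sum_fderiv]
  have h1 : fderiv ℝ (fun y => σ * v y) = fun y => σ • fderiv ℝ v y := by
    ext1 y
    exact fderiv_const_mul (hv.differentiable two_ne_zero y) σ
  have h2 : Differentiable ℝ (fderiv ℝ v) :=
    (hv.fderiv_right (m := 1) (by norm_num)).differentiable one_ne_zero
  have h3 : fderiv ℝ (fun y => σ • fderiv ℝ v y) y = σ • fderiv ℝ (fderiv ℝ v) y :=
    fderiv_const_smul (h2 y) σ
  rw [h1, h3, Finset.mul_sum]
  simp

theorem sqDev_const_mul {n : ℕ} (v : En n → ℝ) (x : En n) (μ r σ : ℝ) :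
    sqDev (fun y => σ * v y) x (σ * μ) r = σ ^ 2 * sqDev v x μ r := by
  unfold sqDev
  rw [← integral_const_mul]
  congr 1; ext y; ring

theorem harnack_abs {n : ℕ} {u : En n → ℝ} (hu : ContDiff ℝ 2 u) {x x' : En n} {δ : ℝ}
    (hδ : 0 < δ) (hlap : ∀ y ∈ ball x δ, laplacianAt u y = 0) (h0 : ∀ y ∈ ball x δ, u y ≠ 0)
    (hx : dist x' x ≤ δ / 4) : |u x| ≤ 16 / 7 * 3 ^ n * |u x'| := by
  obtain ⟨σ, hσ, hpos⟩ := forall_pos_or_forall_neg_on_ball hu.continuous h0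
  have habs : ∀ y ∈ ball x δ, |u y| = σ * u y := fun y hy => by
    have h1 : |σ| = 1 := by rcases hσ with rfl | rfl <;> simp
    rw [← abs_of_pos (hpos y hy), abs_mul, h1, one_mul]
  have hsub : ball x' (3 * (δ / 4)) ⊆ ball x δ := ball_subset_ball' (by linarith)
  rw [habs x (mem_ball_self hδ), habs x' (mem_ball.2 (by linarith))]
  refine harnack (f := fun y => σ * u y) (by fun_prop) (s := δ / 4) (by linarith)
    (fun y hy => ?_) (fun y hy => (hpos y (hsub hy)).le) (by rwa [dist_comm])
  rw [laplacianAt_const_mul hu, hlap y (hsub hy), mul_zero]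

/-- Near its zero set a harmonic function grows by a definite factor at a nearby point, and is
bounded below by a power of the distance to the zero set. -/
theorem exists_growth_and_lower_bound {n : ℕ} {v : En n → ℝ} (hv : ContDiff ℝ 2 v) {R : ℝ}
    (hR : 7 / 8 ≤ R) (hlap : ∀ y ∈ ball (0 : En n) R, laplacianAt v y = 0)
    (hnc : ¬ ∃ c : ℝ, ∀ x ∈ ball (0 : En n) R, v x = c) :
    ∃ ε > 0, ∃ A > 0, ∃ N : ℕ, ∀ x ∈ closedBall (0 : En n) (1 / 4), ∀ δ, 0 < δ → δ ≤ 1 / 16 →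
      (∀ y ∈ ball x δ, v y ≠ 0) → (∃ z, dist z x < 2 * δ ∧ v z = 0) →
      (∃ x', dist x' x < δ / 4 ∧ (1 + ε) * |v x| < |v x'|) ∧ A * δ ^ N ≤ |v x| ^ 2 := by
  obtain ⟨V, hV⟩ := (isCompact_closedBall (0 : En n) (1 / 4)).exists_bound_of_continuousOn
    hv.continuous.continuousOn
  obtain ⟨m, hm, D, hD, N, hdoub⟩ := exists_uniform_doubling hv hR hlap hnc V
  have hJ := ballMass_pos n
  have hC4 : (0 : ℝ) < 16 / 7 * 4 ^ n * D := by positivity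
  have hC3 : (0 : ℝ) < 4 ^ N * ((16 / 7 * 3 ^ n) ^ 2 * ballMass n) := by positivity
  refine ⟨(2 * (16 / 7 * 4 ^ n * D))⁻¹, by positivity,
    m / (4 ^ N * ((16 / 7 * 3 ^ n) ^ 2 * ballMass n)), by positivity, N, ?_⟩
  rintro x hx δ hδ hδ' hne ⟨z, hz, hvz⟩
  have hx0 : dist x 0 ≤ 1 / 4 := hx
  obtain ⟨σ, hσ, hpos⟩ := forall_pos_or_forall_neg_on_ball hv.continuous hne
  have hσ1 : |σ| = 1 := by rcases hσ with rfl | rfl <;> simp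
  have hσ2 : σ ^ 2 = 1 := by rcases hσ with rfl | rfl <;> simp
  set g : En n → ℝ := fun y => σ * v y with hg
  have hgc : ContDiff ℝ 2 g := by fun_prop
  have hglap : ∀ y ∈ ball x (1 / 2), laplacianAt g y = 0 := fun y hy => by
    rw [laplacianAt_const_mul hv, hlap y (ball_subset_ball' (by linarith) hy), mul_zero]
  have habs : ∀ y, |g y| = |v y| := fun y => by rw [hg]; simp [abs_mul, hσ1]
  have hdev : ∀ μ r, sqDev g x (σ * μ) r = sqDev v x μ r := fun μ r => by
    rw [hg, sqDev_const_mul, hσ2, one_mul]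
  have hgx : 0 < g x := hpos x (mem_ball_self hδ)
  have hvx := abs_le.1 (hV x hx)
  have hV0 : 0 ≤ V := (norm_nonneg _).trans (hV x hx)
  constructor
  · obtain ⟨x', h1, h2⟩ := exists_growth_of_doubling hgc
      (D := D) (ε := (2 * (16 / 7 * 4 ^ n * D))⁻¹) hδ
      (fun y hy => hglap y (ball_subset_ball (by linarith) hy)) (fun y hy => (hpos y hy).le) hgx hz
      (by simp [hg, hvz]) (by
        have := (hdoub x hx (v x) hvx (δ / 4) (by linarith) (by linarith)).1
        rw [← hdev, ← hdev] at this
        rwa [show 32 * (δ / 4) = 8 * δ by ring] at this) (by linarith) (by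
        rw [mul_inv, mul_left_comm, mul_inv_cancel₀ hC4.ne']; norm_num)
    refine ⟨x', h1, ?_⟩
    rw [← habs, ← habs, abs_of_pos hgx]
    exact h2.trans_le (le_abs_self _)
  · have h1 := (hdoub x hx 0 ⟨by linarith, hV0⟩ (δ / 4) (by linarith) (by linarith)).2
    rw [← hdev, mul_zero] at h1
    have h2 := le_sq_of_le_sqDev hgc hδ
      (fun y hy => hglap y (ball_subset_ball (by linarith) hy)) (fun y hy => (hpos y hy).le) h1
    rw [← habs, sq_abs, div_mul_eq_mul_div, div_le_iff₀ hC3]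
    rw [div_pow, ← mul_div_assoc, div_le_iff₀ (by positivity)] at h2
    linarith

theorem HarmonicOnSet.exists_global {n : ℕ} {u : En n → ℝ} (hu : HarmonicOnSet u (ball 0 1))
    {R : ℝ} (hR0 : 0 < R) (hR1 : R < 1) :
    ∃ w : En n → ℝ, ContDiff ℝ 2 w ∧ (∀ y ∈ ball (0 : En n) R, w y = u y) ∧
      ∀ y ∈ ball (0 : En n) R, laplacianAt w y = 0 := by
  let χ : ContDiffBump (0 : En n) := ⟨R, (1 + R) / 2, hR0, by linarith⟩
  have heq : ∀ y ∈ ball (0 : En n) R, χ y * u y = u y := fun y hy => by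
    rw [χ.one_of_mem_closedBall (ball_subset_closedBall hy), one_mul]
  refine ⟨fun y => χ y * u y, contDiff_iff_contDiffAt.2 fun y => ?_, heq, fun y hy => ?_⟩
  · by_cases hy : y ∈ ball (0 : En n) 1
    · exact χ.contDiffAt.mul (hu.1.contDiffAt (isOpen_ball.mem_nhds hy))
    · refine (contDiffAt_const (c := (0 : ℝ))).congr_of_eventuallyEq ?_
      have : y ∈ (closedBall (0 : En n) ((1 + R) / 2))ᶜ := fun h =>
        hy (closedBall_subset_ball (by linarith) h)
      filter_upwards [isClosed_closedBall.isOpen_compl.mem_nhds this] with p hp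
      rw [χ.zero_of_le_dist (not_le.1 fun h => hp h).le, zero_mul]
  · have h1 : (fun y => χ y * u y) =ᶠ[𝓝 y] u := by
      filter_upwards [isOpen_ball.mem_nhds hy] with p hp using heq p hp
    rw [← hu.2 y (ball_subset_ball hR1.le hy)]
    simp only [laplacianAt, (h1.iteratedFDeriv ℝ 2).eq_of_nhds]

theorem infDist_pos_of_ne_zero {n : ℕ} {v : En n → ℝ} (hv : Continuous v) {R : ℝ}
    {Z : Set (En n)} (hZ : ∀ q ∈ ball (0 : En n) R, q ∈ Z ↔ v q = 0) (hne : Z.Nonempty)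
    {p : En n} (hp : p ∈ ball (0 : En n) R) (hvp : v p ≠ 0) : 0 < infDist p Z := by
  rw [← infDist_closure]
  refine (isClosed_closure.notMem_iff_infDist_pos hne.closure).1 fun hcl => ?_
  obtain ⟨q, ⟨hq1, hq2⟩, hqZ⟩ := mem_closure_iff.1 hcl (ball 0 R ∩ {q | v q ≠ 0})
    (isOpen_ball.inter (isOpen_ne_fun hv continuous_const)) ⟨hp, hvp⟩
  exact hq2 ((hZ q hq1).1 hqZ)

theorem exists_infDist_lt_imp_abs_le {n : ℕ} {v : En n → ℝ} (hv : Continuous v) {R : ℝ}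
    (hR : 7 / 8 ≤ R) {Z : Set (En n)} (hZ : ∀ q ∈ ball (0 : En n) R, q ∈ Z ↔ v q = 0)
    (hne : Z.Nonempty) {τ : ℝ} (hτ : 0 < τ) :
    ∃ c > 0, ∀ x ∈ closedBall (0 : En n) (1 / 4), infDist x Z < c → |v x| ≤ τ := by
  obtain ⟨c, hc, huc⟩ := Metric.uniformContinuousOn_iff.1
    ((isCompact_closedBall (0 : En n) (1 / 2)).uniformContinuousOn_of_continuous
      hv.continuousOn) τ hτ
  refine ⟨min c (1 / 4), by positivity, fun x hx hd => ?_⟩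
  obtain ⟨z, hzZ, hz⟩ := (infDist_lt_iff hne).1 hd
  have hx0 : dist x 0 ≤ 1 / 4 := hx
  have hz0 : dist z 0 ≤ 1 / 2 := by
    have := dist_triangle z x 0
    rw [dist_comm z x] at this
    linarith [hz.trans_le (min_le_right _ _)]
  have h := huc x (by rw [mem_closedBall]; linarith) z hz0 (hz.trans_le (min_le_left _ _))
  rw [(hZ z (mem_ball.2 (by linarith))).1 hzZ, Real.dist_eq, sub_zero] at h
  exact h.le

theorem exists_telescoping_potential {A ε : ℝ} (hA : 0 < A) (hε : 0 < ε) (N : ℕ) :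
    ∃ q > (0 : ℝ), ∃ B > 0, ∀ a a' δ : ℝ, 0 < a → 0 ≤ δ → δ ≤ 1 → A * δ ^ N ≤ a ^ 2 →
      (1 + ε) * a < a' → δ / 4 ≤ B * ((a' ^ 2) ^ q - (a ^ 2) ^ q) := by
  set q : ℝ := ((N + 1 : ℕ) : ℝ)⁻¹ with hq
  have hq0 : 0 < q := by positivity
  have hη : 0 < ((1 + ε) ^ 2) ^ q - 1 :=
    sub_pos.2 (Real.one_lt_rpow (by nlinarith) hq0)
  have hK : 0 < (A⁻¹) ^ q := by positivity
  refine ⟨q, hq0, (A⁻¹) ^ q / (4 * (((1 + ε) ^ 2) ^ q - 1)), by positivity, ?_⟩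
  intro a a' δ ha hδ hδ1 hle hlt
  have h1 : δ ≤ (A⁻¹) ^ q * (a ^ 2) ^ q := by
    rw [← Real.mul_rpow (by positivity) (by positivity),
      ← Real.pow_rpow_inv_natCast hδ (Nat.succ_ne_zero N)]
    refine Real.rpow_le_rpow (by positivity) ?_ hq0.le
    rw [le_inv_mul_iff₀ hA]
    refine le_trans ?_ hle
    exact mul_le_mul_of_nonneg_left (pow_le_pow_of_le_one hδ hδ1 (Nat.le_succ N)) hA.le
  have h2 : ((1 + ε) ^ 2) ^ q * (a ^ 2) ^ q ≤ (a' ^ 2) ^ q := by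
    rw [← Real.mul_rpow (by positivity) (by positivity), ← mul_pow]
    exact Real.rpow_le_rpow (by positivity) (pow_le_pow_left₀ (by positivity) hlt.le 2) hq0.le
  calc δ / 4 ≤ (A⁻¹) ^ q * (a ^ 2) ^ q / 4 := by linarith
    _ = (A⁻¹) ^ q / (4 * (((1 + ε) ^ 2) ^ q - 1))
        * (((1 + ε) ^ 2) ^ q * (a ^ 2) ^ q - (a ^ 2) ^ q) := by
      field_simp
    _ ≤ _ := by gcongr

theorem exists_exponent {A V : ℝ} (hA : 0 < A) (hV : 0 < V) (N γ : ℕ) :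
    ∃ β : ℕ, 0 < β ∧ ∀ a b s t δ : ℝ, 0 ≤ a → 0 ≤ b → 0 ≤ s → 0 ≤ t → t ≤ V → 0 ≤ δ →
      δ ≤ 1 / 2 → A * δ ^ N ≤ s ^ 2 → a * s ^ γ ≤ b * t ^ γ → a * δ ^ β ≤ b := by
  obtain ⟨j, hj⟩ := exists_pow_lt_of_lt_one (show 0 < A ^ γ / V ^ (2 * γ) by positivity)
    (by norm_num : (1 / 2 : ℝ) < 1)
  refine ⟨N * γ + j + 1, by omega, ?_⟩
  intro a b s t δ ha hb hs ht htV hδ hδ2 hle hab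
  have hδ1 : δ ≤ 1 := by linarith
  have h1 : δ ^ j ≤ A ^ γ / V ^ (2 * γ) := (pow_le_pow_left₀ hδ hδ2 j).trans hj.le
  rw [le_div_iff₀ (by positivity)] at h1
  have h2 : (a * δ ^ (N * γ + j + 1) * V ^ γ) ^ 2 ≤ (b * V ^ γ) ^ 2 := by
    calc (a * δ ^ (N * γ + j + 1) * V ^ γ) ^ 2
        = a ^ 2 * ((δ ^ j * V ^ (2 * γ)) * δ ^ (N * γ)) * δ ^ (N * γ + j + 2) := by ring
      _ ≤ a ^ 2 * (A ^ γ * δ ^ (N * γ)) * 1 := by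
          gcongr
          exact pow_le_one₀ hδ hδ1
      _ = a ^ 2 * (A * δ ^ N) ^ γ := by rw [mul_one, mul_pow, pow_mul]
      _ ≤ a ^ 2 * (s ^ 2) ^ γ := by gcongr
      _ = (a * s ^ γ) ^ 2 := by ring
      _ ≤ (b * t ^ γ) ^ 2 := by gcongr
      _ ≤ (b * V ^ γ) ^ 2 := by gcongr
  have h3 := (sq_le_sq₀ (by positivity) (by positivity)).1 h2
  exact le_of_mul_le_mul_right h3 (by positivity)

theorem exists_far_point_of_contDiff {n : ℕ} {v : En n → ℝ} (hv : ContDiff ℝ 2 v) {R : ℝ}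
    (hR : 7 / 8 ≤ R) (hlap : ∀ y ∈ ball (0 : En n) R, laplacianAt v y = 0)
    (hnc : ¬ ∃ c : ℝ, ∀ x ∈ ball (0 : En n) R, v x = c) {Z : Set (En n)}
    (hZ : ∀ q ∈ ball (0 : En n) R, q ∈ Z ↔ v q = 0)
    (hne : (Z ∩ ball (0 : En n) (1 / 2)).Nonempty) :
    ∃ β > (0 : ℝ), ∃ c : ℝ, 0 < c ∧ c < 1 / 2 ∧
      ∀ u : En n → ℝ, ContDiff ℝ 2 u → (∀ y ∈ ball (0 : En n) R, laplacianAt u y = 0) →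
        (∀ q ∈ ball (0 : En n) R, q ∈ Z ↔ u q = 0) → ∀ x ∈ ball (0 : En n) (1 / 8),
          ∃ y ∈ ball (0 : En n) (1 / 2), c ≤ infDist y Z ∧ |u x| * infDist x Z ^ β ≤ |u y| := by
  obtain ⟨z₀, hz₀Z, hz₀⟩ := hne
  have hZne : Z.Nonempty := ⟨z₀, hz₀Z⟩
  obtain ⟨ε, hε, A, hA, N, hstep⟩ := exists_growth_and_lower_bound hv hR hlap hnc
  obtain ⟨q, hq, B, hB, htel⟩ := exists_telescoping_potential hA hε N
  obtain ⟨γ, hγ⟩ := pow_unbounded_of_one_lt (16 / 7 * 3 ^ n : ℝ) (show 1 < 1 + ε by linarith)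
  obtain ⟨V, hV⟩ := (isCompact_closedBall (0 : En n) (1 / 4)).exists_bound_of_continuousOn
    hv.continuous.continuousOn
  have hV1 : 0 < max V 1 := by positivity
  obtain ⟨β, hβ, hexp⟩ := exists_exponent hA hV1 N γ
  obtain ⟨τ, hτ, hτB⟩ : ∃ τ > 0, B * (τ ^ 2) ^ q ≤ 1 / 16 := by
    have hc : ContinuousAt (fun τ : ℝ => B * (τ ^ 2) ^ q) 0 := by
      refine continuousAt_const.mul (ContinuousAt.rpow_const (by fun_prop) (Or.inr hq.le))
    have h0 : ∀ᶠ τ in 𝓝 (0 : ℝ), B * (τ ^ 2) ^ q < 1 / 16 :=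
      hc.eventually_lt_const (by simp [Real.zero_rpow hq.ne'])
    obtain ⟨τ, h1, h2⟩ := ((h0.filter_mono nhdsWithin_le_nhds).and
      (self_mem_nhdsWithin (s := Ioi (0 : ℝ)))).exists
    exact ⟨τ, h2, h1.le⟩
  obtain ⟨c₀, hc₀, hsmall⟩ := exists_infDist_lt_imp_abs_le hv.continuous hR hZ hZne hτ
  obtain ⟨p₀, hp₀, hvp₀⟩ : ∃ p ∈ ball (0 : En n) (1 / 8), v p ≠ 0 := by
    by_contra! hcon
    exact hnc ⟨0, eq_const_on_ball_of_eq_const hv hlap (by norm_num) hcon⟩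
  have hd₀ := infDist_pos_of_ne_zero hv.continuous hZ hZne
    (ball_subset_ball (by linarith) hp₀) hvp₀
  have hc : 0 < min (min c₀ (1 / 16)) (infDist p₀ Z) := by positivity
  refine ⟨β, by exact_mod_cast hβ, min (min c₀ (1 / 16)) (infDist p₀ Z), hc, ?_, ?_⟩
  · exact ((min_le_left _ _).trans (min_le_right _ _)).trans_lt (by norm_num)
  set c := min (min c₀ (1 / 16)) (infDist p₀ Z) with hcdef
  have hcc₀ : c ≤ c₀ := (min_le_left _ _).trans (min_le_left _ _)
  have hc16 : c ≤ 1 / 16 := (min_le_left _ _).trans (min_le_right _ _)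
  intro u hu hulap huZ x hx
  simp only [Real.rpow_natCast]
  have hx0 : dist x 0 < 1 / 8 := hx
  by_cases hux : u x = 0
  · refine ⟨p₀, ball_subset_ball (by norm_num) hp₀, min_le_right _ _, ?_⟩
    simp [hux]
  by_cases hcx : c ≤ infDist x Z
  · refine ⟨x, ball_subset_ball (by norm_num) hx, hcx, ?_⟩
    refine mul_le_of_le_one_right (abs_nonneg _) (pow_le_one₀ infDist_nonneg ?_)
    refine (infDist_le_dist_of_mem hz₀Z).trans ((dist_triangle x 0 z₀).trans ?_)
    rw [dist_comm 0 z₀]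
    linarith [mem_ball.1 hz₀]
  rw [not_le] at hcx
  have near : ∀ p ∈ closedBall (0 : En n) (1 / 4), v p ≠ 0 → infDist p Z < c →
      0 < infDist p Z ∧ infDist p Z ≤ 1 / 16 ∧ ball p (infDist p Z) ⊆ ball 0 R ∧
      (∀ y ∈ ball p (infDist p Z), y ∉ Z) ∧ ∃ z, dist z p < 2 * infDist p Z ∧ v z = 0 := by
    intro p hp hvp hpc
    have hp0 : dist p 0 ≤ 1 / 4 := hp
    have hpos := infDist_pos_of_ne_zero hv.continuous hZ hZne
      (closedBall_subset_ball (by linarith) hp) hvp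
    refine ⟨hpos, by linarith, ball_subset_ball' (by linarith), fun y hy hyZ => ?_, ?_⟩
    · have := infDist_le_dist_of_mem (x := p) hyZ
      rw [mem_ball, dist_comm] at hy
      linarith
    · obtain ⟨z, hzZ, hz⟩ := (infDist_lt_iff hZne).1 (show infDist p Z < 2 * infDist p Z by linarith)
      rw [dist_comm] at hz
      refine ⟨z, hz, (hZ z ?_).1 hzZ⟩
      have := dist_triangle z p 0
      rw [mem_ball]; linarith
  have hxR : x ∈ ball (0 : En n) R := ball_subset_ball (by linarith) hx
  have hx4 : x ∈ closedBall (0 : En n) (1 / 4) :=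
    ball_subset_closedBall (ball_subset_ball (by norm_num) hx)
  have hvx : v x ≠ 0 := fun h => hux ((huZ x hxR).1 ((hZ x hxR).2 h))
  set ψ : En n → ℝ := fun p => (|v p| ^ 2) ^ q with hψ
  have hψc : Continuous ψ := by
    have := hv.continuous
    exact Continuous.rpow_const (by fun_prop) fun _ => Or.inr hq.le
  have hvc := hv.continuous
  have huc := hu.continuous
  have hS : IsCompact (closedBall (0 : En n) (1 / 4) ∩
      ({p | dist p x ≤ B * (ψ p - ψ x)} ∩ {p | |u x| * |v x| ^ γ ≤ |u p| * |v p| ^ γ})) :=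
    (isCompact_closedBall _ _).inter_right
      ((isClosed_le (by fun_prop) (by fun_prop)).inter (isClosed_le (by fun_prop) (by fun_prop)))
  obtain ⟨p, ⟨hp4, hpd, hpu⟩, hpmax⟩ := hS.exists_isMaxOn (f := fun p => |v p|)
    ⟨x, hx4, by simp, le_refl (|u x| * |v x| ^ γ)⟩ (by fun_prop)
  rw [mem_ofPred_eq] at hpd hpu
  have hvpx : |v x| ≤ |v p| :=
    hpmax (a := x) ⟨hx4, by simp, le_refl (|u x| * |v x| ^ γ)⟩
  have hvp : 0 < |v p| := (abs_pos.2 hvx).trans_le hvpx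
  refine ⟨p, closedBall_subset_ball (by norm_num) hp4, ?_, ?_⟩
  · by_contra! hpc
    obtain ⟨hδ, hδ16, hsub, hnZ, hz⟩ := near p hp4 (abs_pos.1 hvp) hpc
    obtain ⟨⟨x', hx', hgrow⟩, hlow⟩ := hstep p hp4 _ hδ hδ16
      (fun y hy h => hnZ y hy ((hZ y (hsub hy)).2 h)) hz
    have hdx' := htel |v p| |v x'| _ hvp hδ.le (by linarith) hlow hgrow
    have hψp : B * ψ p ≤ 1 / 16 := by
      refine le_trans ?_ hτB
      have : |v p| ≤ τ := hsmall p hp4 (hpc.trans_le hcc₀)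
      simp only [hψ]; gcongr
    have hψx : 0 ≤ B * ψ x := by rw [hψ]; positivity
    have hx'4 : x' ∈ closedBall (0 : En n) (1 / 4) := by
      have t1 := dist_triangle x' p 0
      have t2 := dist_triangle p x 0
      rw [mem_closedBall]
      linarith
    have hmem := hpmax (a := x') ⟨hx'4, ?_, ?_⟩
    · have : |v x'| ≤ |v p| := hmem
      nlinarith
    · have t1 := dist_triangle x' p x
      have : dist x' p ≤ B * (ψ x' - ψ p) := hx'.le.trans hdx'
      rw [mem_ofPred_eq]
      linarith
    · have hh := harnack_abs hu hδ (fun y hy => hulap y (hsub hy))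
        (fun y hy h => hnZ y hy ((huZ y (hsub hy)).2 h)) hx'.le
      rw [mem_ofPred_eq]
      calc |u x| * |v x| ^ γ ≤ |u p| * |v p| ^ γ := hpu
        _ ≤ ((1 + ε) ^ γ * |u x'|) * |v p| ^ γ := by
          gcongr
          exact hh.trans (by gcongr)
        _ = |u x'| * ((1 + ε) * |v p|) ^ γ := by rw [mul_pow]; ring
        _ ≤ |u x'| * |v x'| ^ γ := by gcongr
  · obtain ⟨hδ, hδ16, hsub, hnZ, hz⟩ := near x hx4 hvx hcx
    have hlow := (hstep x hx4 _ hδ hδ16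
      (fun y hy h => hnZ y hy ((hZ y (hsub hy)).2 h)) hz).2
    exact hexp |u x| |u p| |v x| |v p| _ (abs_nonneg _) (abs_nonneg _) (abs_nonneg _)
      (abs_nonneg _) ((hV p hp4).trans (le_max_left _ _)) hδ.le (by linarith) hlow hpu

theorem stmt14 (n : ℕ) (v : En n → ℝ)
    (hv : HarmonicOnSet v (ball 0 1))
    (hnc : ¬ ∃ c : ℝ, ∀ x ∈ ball (0 : En n) 1, v x = c)
    (hZ : (zeroSet v (ball 0 1) ∩ ball (0 : En n) (1/2)).Nonempty) :
    ∃ β > (0 : ℝ), ∃ c : ℝ, 0 < c ∧ c < 1/2 ∧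
      ∀ u : En n → ℝ, HarmonicOnSet u (ball 0 1) →
        zeroSet u (ball 0 1) = zeroSet v (ball 0 1) →
        ∀ x ∈ ball (0 : En n) (1/8),
          ∃ y ∈ ball (0 : En n) (1/2),
            c ≤ infDist y (zeroSet v (ball 0 1)) ∧
            |u x| * infDist x (zeroSet v (ball 0 1)) ^ β ≤ |u y| := by
  obtain ⟨R, hR, hR1, hncR⟩ : ∃ R : ℝ, 7 / 8 ≤ R ∧ R < 1 ∧
      ¬ ∃ c : ℝ, ∀ x ∈ ball (0 : En n) R, v x = c := by
    by_contra! hcon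
    refine hnc ⟨v 0, fun x hx => ?_⟩
    have hx1 : dist x 0 < 1 := hx
    obtain ⟨R, hR, hR1⟩ := exists_between (max_lt hx1 (by norm_num : (7 / 8 : ℝ) < 1))
    obtain ⟨hR2, hR3⟩ := max_lt_iff.1 hR
    obtain ⟨c, hc⟩ := hcon R hR3.le hR1
    rw [hc x hR2, hc 0 (mem_ball_self (by linarith))]
  have hsub : ball (0 : En n) R ⊆ ball 0 1 := ball_subset_ball hR1.le
  have hsmall : ∀ {r : ℝ}, r ≤ 1 / 2 → ball (0 : En n) r ⊆ ball 0 R := fun hr =>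
    ball_subset_ball (by linarith)
  obtain ⟨w, hw, hwv, hwlap⟩ := hv.exists_global (by linarith) hR1
  obtain ⟨β, hβ, c, hc0, hc1, h⟩ := exists_far_point_of_contDiff hw hR hwlap
    (fun ⟨c, hc⟩ => hncR ⟨c, fun x hx => (hwv x hx).symm.trans (hc x hx)⟩)
    (Z := zeroSet v (ball 0 1))
    (fun q hq => by rw [hwv q hq]; exact ⟨fun h => h.2, fun h => ⟨hsub hq, h⟩⟩) hZ
  refine ⟨β, hβ, c, hc0, hc1, fun u hu huv x hx => ?_⟩
  obtain ⟨u', hu', huu', hulap⟩ := hu.exists_global (by linarith) hR1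
  obtain ⟨y, hy, hcy, hle⟩ := h u' hu' hulap
    (fun q hq => by rw [huu' q hq, ← huv]; exact ⟨fun h => h.2, fun h => ⟨hsub hq, h⟩⟩) x hx
  rw [huu' x (hsmall (by norm_num) hx), huu' y (hsmall le_rfl hy)] at hle
  exact ⟨y, hy, hcy, hle⟩
end
end
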